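/- arXiv:1901.09578 — 10 statements merged into one kernel-verified Lean document; each statement's English description precedes it below -/
import Mathlib

section
/- Let p_σ ∈ [0,1] be given for each σ ∈ ∂Δ_n and define p'_σ = 1 − p_{σ̂}. Then for every simplicial complex Y ⊆ ∂Δ_n one has P̄_n(c(Y)) = P̲'_n(Y) and P̲_n(c(Y)) = P̄'_n(Y), where P̄_n, P̲_n are the upper and lower measures with parameters p_σ and P̄'_n, P̲'_n are the upper and lower measures with parameters p'_σ. -/
open Finset

/-- The full simplex `Δₙ`: all nonempty subsets of `[n] = {0,…,n}`. -/
def simplexAll (n : ℕ) : Finset (Finset (Fin (n+1))) :=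
  Finset.univ.filter fun σ => σ.Nonempty

/-- The boundary `∂Δₙ`: all nonempty proper subsets of `[n]`. -/
def bdry (n : ℕ) : Finset (Finset (Fin (n+1))) :=
  Finset.univ.filter fun σ => σ.Nonempty ∧ σ ≠ Finset.univ

/-- A hypergraph is a simplicial complex if it is closed under passing to
nonempty subsets. -/
def IsComplex {n : ℕ} (X : Finset (Finset (Fin (n+1)))) : Prop :=
  ∀ σ ∈ X, ∀ τ : Finset (Fin (n+1)), τ ⊆ σ → τ.Nonempty → τ ∈ X

instance {n : ℕ} (X : Finset (Finset (Fin (n+1)))) : Decidable (IsComplex X) :=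
  inferInstanceAs (Decidable (∀ σ ∈ X, ∀ τ : Finset (Fin (n+1)), τ ⊆ σ → τ.Nonempty → τ ∈ X))

/-- The dual hypergraph `c(X) = {σ̂ : σ ∈ ∂Δₙ, σ ∉ X}`, where `σ̂ = [n] \ σ`. -/
def dual {n : ℕ} (X : Finset (Finset (Fin (n+1)))) : Finset (Finset (Fin (n+1))) :=
  (bdry n \ X).image fun σ => σᶜ

/-- `X̄`: the smallest simplicial complex containing the hypergraph `X`. -/
def clUp {n : ℕ} (X : Finset (Finset (Fin (n+1)))) : Finset (Finset (Fin (n+1))) :=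
  Finset.univ.filter fun τ => τ.Nonempty ∧ ∃ σ ∈ X, τ ⊆ σ

/-- `X̲`: the largest simplicial complex contained in the hypergraph `X`. -/
def clLow {n : ℕ} (X : Finset (Finset (Fin (n+1)))) : Finset (Finset (Fin (n+1))) :=
  Finset.univ.filter fun τ => τ.Nonempty ∧ ∀ σ : Finset (Fin (n+1)), σ ⊆ τ → σ.Nonempty → σ ∈ X

/-- The Bernoulli measure with parameters `p` on hypergraphs contained in the
ambient set `S` of simplices: `P(X) = ∏_{σ∈X} p σ · ∏_{σ∈S\X} (1 - p σ)`. -/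
def bern {n : ℕ} (S : Finset (Finset (Fin (n+1)))) (p : Finset (Fin (n+1)) → ℝ)
    (X : Finset (Finset (Fin (n+1)))) : ℝ :=
  (∏ σ ∈ X, p σ) * ∏ σ ∈ S \ X, (1 - p σ)

/-- The upper measure: `P̄(Y) = Σ_{X ⊆ S, X̄ = Y} P(X)`. -/
def upperP {n : ℕ} (S : Finset (Finset (Fin (n+1)))) (p : Finset (Fin (n+1)) → ℝ)
    (Y : Finset (Finset (Fin (n+1)))) : ℝ :=
  ∑ X ∈ S.powerset.filter (fun X => clUp X = Y), bern S p X

/-- The lower measure: `P̲(Y) = Σ_{X ⊆ S, X̲ = Y} P(X)`. -/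
def lowerP {n : ℕ} (S : Finset (Finset (Fin (n+1)))) (p : Finset (Fin (n+1)) → ℝ)
    (Y : Finset (Finset (Fin (n+1)))) : ℝ :=
  ∑ X ∈ S.powerset.filter (fun X => clLow X = Y), bern S p X

/-- External simplices of `Y` relative to the ambient set `S`: simplices
`σ ∈ S` with `σ ∉ Y` but every nonempty proper subset of `σ` in `Y`. -/
def extSimp {n : ℕ} (S Y : Finset (Finset (Fin (n+1)))) : Finset (Finset (Fin (n+1))) :=
  S.filter fun σ => σ ∉ Y ∧ ∀ τ : Finset (Fin (n+1)), τ ⊂ σ → τ.Nonempty → τ ∈ Y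

/-- Maximal simplices of `Y`: simplices of `Y` not properly contained in another
simplex of `Y`. -/
def maxSimp {n : ℕ} (Y : Finset (Finset (Fin (n+1)))) : Finset (Finset (Fin (n+1))) :=
  Y.filter fun σ => ∀ τ ∈ Y, σ ⊆ τ → σ = τ

theorem aux_mem_bdry {n : ℕ} (σ : Finset (Fin (n+1))) :
    σ ∈ bdry n ↔ σ.Nonempty ∧ σ ≠ Finset.univ := by simp [bdry]

theorem aux_compl_bdry {n : ℕ} (σ : Finset (Fin (n+1))) : σᶜ ∈ bdry n ↔ σ ∈ bdry n := by
  rw [aux_mem_bdry, aux_mem_bdry, Finset.nonempty_iff_ne_empty, Finset.nonempty_iff_ne_empty,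
    Ne, Ne, Ne, Ne, Finset.compl_eq_empty_iff, Finset.compl_eq_univ_iff, and_comm]

theorem aux_mem_dual {n : ℕ} (X : Finset (Finset (Fin (n+1)))) (σ : Finset (Fin (n+1))) :
    σ ∈ dual X ↔ σ ∈ bdry n ∧ σᶜ ∉ X := by
  unfold dual
  rw [Finset.mem_image]
  constructor
  · rintro ⟨τ, h, rfl⟩
    rw [Finset.mem_sdiff] at h
    rw [aux_compl_bdry, compl_compl]
    exact h
  · intro h
    refine ⟨σᶜ, ?_, compl_compl σ⟩
    rw [Finset.mem_sdiff, aux_compl_bdry]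
    exact h

theorem aux_dual_sub {n : ℕ} (X : Finset (Finset (Fin (n+1)))) : dual X ⊆ bdry n :=
  fun σ h => ((aux_mem_dual X σ).1 h).1

theorem aux_dual_dual {n : ℕ} {X : Finset (Finset (Fin (n+1)))} (hX : X ⊆ bdry n) :
    dual (dual X) = X := by
  ext σ
  rw [aux_mem_dual, aux_mem_dual, aux_compl_bdry, compl_compl]
  constructor
  · rintro ⟨h1, h2⟩
    by_contra h
    exact h2 ⟨h1, h⟩
  · intro h
    exact ⟨hX h, fun h' => h'.2 h⟩

theorem aux_clUp_sub {n : ℕ} {X : Finset (Finset (Fin (n+1)))} (hX : X ⊆ bdry n) :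
    clUp X ⊆ bdry n := by
  intro τ h
  simp only [clUp, Finset.mem_filter, Finset.mem_univ, true_and] at h
  obtain ⟨h1, σ, hσ, hs⟩ := h
  rw [aux_mem_bdry]
  refine ⟨h1, ?_⟩
  rintro rfl
  exact ((aux_mem_bdry σ).1 (hX hσ)).2 (Finset.univ_subset_iff.1 hs)

theorem aux_clLow_sub {n : ℕ} {X : Finset (Finset (Fin (n+1)))} (hX : X ⊆ bdry n) :
    clLow X ⊆ bdry n := by
  intro τ h
  simp only [clLow, Finset.mem_filter, Finset.mem_univ, true_and] at h
  exact hX (h.2 τ (Finset.Subset.refl _) h.1)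

theorem aux_dual_clUp {n : ℕ} {X : Finset (Finset (Fin (n+1)))} (hX : X ⊆ bdry n) :
    dual (clUp X) = clLow (dual X) := by
  ext τ
  rw [aux_mem_dual]
  simp only [clUp, clLow, Finset.mem_filter, Finset.mem_univ, true_and, aux_mem_dual]
  constructor
  · rintro ⟨h1, h2⟩
    refine ⟨((aux_mem_bdry τ).1 h1).1, fun σ hs hne => ⟨?_, fun hx => h2 ⟨?_, σᶜ, hx, ?_⟩⟩⟩
    · rw [aux_mem_bdry]
      refine ⟨hne, ?_⟩
      rintro rfl
      exact ((aux_mem_bdry τ).1 h1).2 (Finset.univ_subset_iff.1 hs)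
    · exact ((aux_mem_bdry _).1 ((aux_compl_bdry τ).2 h1)).1
    · exact Finset.compl_subset_compl.2 hs
  · rintro ⟨h1, h2⟩
    refine ⟨(h2 τ (Finset.Subset.refl _) h1).1, ?_⟩
    rintro ⟨_, σ, hσ, hs⟩
    have h3 : σᶜ ⊆ τ := by
      have := Finset.compl_subset_compl.2 hs
      rwa [compl_compl] at this
    have := (h2 σᶜ h3 ((aux_mem_bdry _).1 ((aux_compl_bdry σ).2 (hX hσ))).1).2
    rw [compl_compl] at this
    exact this hσ

theorem aux_dual_clLow {n : ℕ} {X : Finset (Finset (Fin (n+1)))} (hX : X ⊆ bdry n) :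
    dual (clLow X) = clUp (dual X) := by
  have h := aux_dual_clUp (aux_dual_sub X)
  rw [aux_dual_dual hX] at h
  rw [← h, aux_dual_dual (aux_clUp_sub (aux_dual_sub X))]

theorem aux_bern {n : ℕ} (p : Finset (Fin (n+1)) → ℝ) {X : Finset (Finset (Fin (n+1)))}
    (hX : X ⊆ bdry n) :
    bern (bdry n) p X = bern (bdry n) (fun σ => 1 - p σᶜ) (dual X) := by
  have h1 : ∀ (f : Finset (Fin (n+1)) → ℝ) (Z : Finset (Finset (Fin (n+1)))),
      ∏ σ ∈ dual Z, f σ = ∏ σ ∈ bdry n \ Z, f σᶜ := by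
    intro f Z
    unfold dual
    exact Finset.prod_image (fun a _ b _ h => compl_injective h)
  have h2 : bdry n \ dual X = X.image (fun σ => σᶜ) := by
    ext σ
    rw [Finset.mem_sdiff, aux_mem_dual, Finset.mem_image]
    constructor
    · rintro ⟨a, b⟩
      refine ⟨σᶜ, ?_, compl_compl σ⟩
      by_contra h
      exact b ⟨a, h⟩
    · rintro ⟨τ, h, rfl⟩
      rw [aux_compl_bdry, compl_compl]
      exact ⟨hX h, fun h' => h'.2 h⟩
  unfold bern
  rw [h1, h2, Finset.prod_image (fun a _ b _ h => compl_injective h)]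
  simp only [compl_compl, sub_sub_cancel]
  exact mul_comm _ _

/-- Proposition 4.3(2): with dual parameters `p'_σ = 1 - p_{σ̂}`, for every
simplicial complex `Y ⊆ ∂Δₙ` one has `P̄ₙ(c(Y)) = P̲'ₙ(Y)` and
`P̲ₙ(c(Y)) = P̄'ₙ(Y)`. -/
theorem measures_dual (n : ℕ) (hn : 1 ≤ n) (p : Finset (Fin (n+1)) → ℝ)
    (hp : ∀ σ ∈ bdry n, 0 ≤ p σ ∧ p σ ≤ 1)
    (Y : Finset (Finset (Fin (n+1)))) (hY : Y ⊆ bdry n) (hYc : IsComplex Y) :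
    upperP (bdry n) p (dual Y) = lowerP (bdry n) (fun σ => 1 - p σᶜ) Y ∧
    lowerP (bdry n) p (dual Y) = upperP (bdry n) (fun σ => 1 - p σᶜ) Y := by
  unfold upperP lowerP
  constructor
  · refine Finset.sum_bij' (fun X _ => dual X) (fun X _ => dual X) ?_ ?_ ?_ ?_ ?_
    · intro X hX
      simp only [Finset.mem_filter, Finset.mem_powerset] at hX ⊢
      exact ⟨aux_dual_sub X, by rw [← aux_dual_clUp hX.1, hX.2, aux_dual_dual hY]⟩
    · intro X hX
      simp only [Finset.mem_filter, Finset.mem_powerset] at hX ⊢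
      exact ⟨aux_dual_sub X, by rw [← aux_dual_clLow hX.1, hX.2]⟩
    · intro X hX
      exact aux_dual_dual (Finset.mem_powerset.1 (Finset.mem_filter.1 hX).1)
    · intro X hX
      exact aux_dual_dual (Finset.mem_powerset.1 (Finset.mem_filter.1 hX).1)
    · intro X hX
      exact aux_bern p (Finset.mem_powerset.1 (Finset.mem_filter.1 hX).1)
  · refine Finset.sum_bij' (fun X _ => dual X) (fun X _ => dual X) ?_ ?_ ?_ ?_ ?_
    · intro X hX
      simp only [Finset.mem_filter, Finset.mem_powerset] at hX ⊢
      exact ⟨aux_dual_sub X, by rw [← aux_dual_clLow hX.1, hX.2, aux_dual_dual hY]⟩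
    · intro X hX
      simp only [Finset.mem_filter, Finset.mem_powerset] at hX ⊢
      exact ⟨aux_dual_sub X, by rw [← aux_dual_clUp hX.1, hX.2]⟩
    · intro X hX
      exact aux_dual_dual (Finset.mem_powerset.1 (Finset.mem_filter.1 hX).1)
    · intro X hX
      exact aux_dual_dual (Finset.mem_powerset.1 (Finset.mem_filter.1 hX).1)
    · intro X hX
      exact aux_bern p (Finset.mem_powerset.1 (Finset.mem_filter.1 hX).1)
end

section
/- (Sandwich formula for the upper model.) Let A ⊆ B ⊆ ∂Δ_n be simplicial complexes. For S ⊆ M(A) let B_S be the set of simplices τ ∈ B such that τ ⊇ σ for some σ ∈ S, let Q_S = ∏_{τ∈B_S} q_τ (with Q_∅ = 1) and Q̃ = ∏_{τ∈∂Δ_n, τ∉B} q_τ. Then the upper-model probability that A ⊆ Y ⊆ B, namely Σ_{Y complex, A⊆Y⊆B} P̄_n(Y), equals Q̃ · Σ_{S⊆M(A)} (−1)^{|S|} Q_S. -/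
open Finset

theorem sum_bern_powerset {n : ℕ} (S C : Finset (Finset (Fin (n+1)))) (hC : C ⊆ S)
    (p : Finset (Fin (n+1)) → ℝ) :
    ∑ X ∈ C.powerset, bern S p X = ∏ τ ∈ S \ C, (1 - p τ) := by
  have h1 : ∀ X ∈ C.powerset, bern S p X =
      ((∏ σ ∈ X, p σ) * ∏ σ ∈ C \ X, (1 - p σ)) * ∏ τ ∈ S \ C, (1 - p τ) := by
    intro X hX
    rw [Finset.mem_powerset] at hX
    have : S \ X = (C \ X) ∪ (S \ C) := by
      ext a
      have := @hX a
      have := @hC a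
      simp only [Finset.mem_sdiff, Finset.mem_union]
      tauto
    unfold bern
    rw [this, Finset.prod_union, mul_assoc]
    rw [Finset.disjoint_left]
    intro a
    simp only [Finset.mem_sdiff]
    tauto
  rw [Finset.sum_congr rfl h1, ← Finset.sum_mul, ← Finset.prod_add]
  simp

theorem clUp_complex {n : ℕ} (X : Finset (Finset (Fin (n+1)))) : IsComplex (clUp X) := by
  intro σ hσ τ h1 h2
  simp only [clUp, Finset.mem_filter, Finset.mem_univ, true_and] at *
  obtain ⟨_, ρ, hρ, h⟩ := hσ
  exact ⟨h2, ρ, hρ, h1.trans h⟩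

theorem clUp_sub_iff {n : ℕ} (X B : Finset (Finset (Fin (n+1)))) (hX : X ⊆ bdry n)
    (hB : IsComplex B) : clUp X ⊆ B ↔ X ⊆ B := by
  constructor
  · intro h σ hσ
    apply h
    have := hX hσ
    simp only [bdry, clUp, Finset.mem_filter, Finset.mem_univ, true_and] at *
    exact ⟨this.1, σ, hσ, subset_rfl⟩
  · intro h σ hσ
    simp only [clUp, Finset.mem_filter, Finset.mem_univ, true_and] at hσ
    obtain ⟨h1, ρ, hρ, h2⟩ := hσ
    exact hB ρ (h hρ) σ h2 h1

theorem sub_clUp_iff {n : ℕ} (X A : Finset (Finset (Fin (n+1)))) (hA : A ⊆ bdry n) :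
    A ⊆ clUp X ↔ ∀ σ ∈ maxSimp A, ∃ τ ∈ X, σ ⊆ τ := by
  constructor
  · intro h σ hσ
    have := h (Finset.mem_filter.1 hσ).1
    simp only [clUp, Finset.mem_filter, Finset.mem_univ, true_and] at this
    exact this.2
  · intro h σ hσ
    have h0 := hA hσ
    simp only [bdry, clUp, Finset.mem_filter, Finset.mem_univ, true_and] at *
    refine ⟨h0.1, ?_⟩
    obtain ⟨m, hm, hmax⟩ := A.exists_le_maximal hσ
    obtain ⟨τ, h1, h2⟩ := h m (Finset.mem_filter.2 ⟨hmax.prop, fun τ hτ hs =>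
      le_antisymm hs (hmax.le_of_ge hτ hs)⟩)
    exact ⟨τ, h1, hm.trans h2⟩

/-- Sandwich formula for the upper model: for simplicial complexes
`A ⊆ B ⊆ ∂Δₙ`, the upper-model probability that `A ⊆ Y ⊆ B` equals
`Q̃ · Σ_{S ⊆ M(A)} (-1)^{|S|} Q_S`, where `Q̃ = ∏_{τ∉B} q_τ` and
`Q_S = ∏_{τ∈B_S} q_τ` with `B_S = {τ ∈ B : τ ⊇ σ for some σ ∈ S}`. -/
theorem upper_sandwich (n : ℕ) (hn : 1 ≤ n) (p : Finset (Fin (n+1)) → ℝ)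
    (hp : ∀ σ ∈ bdry n, 0 ≤ p σ ∧ p σ ≤ 1)
    (A B : Finset (Finset (Fin (n+1))))
    (hA : IsComplex A) (hB : IsComplex B) (hAB : A ⊆ B) (hBb : B ⊆ bdry n) :
    ∑ Y ∈ (bdry n).powerset.filter (fun Y => IsComplex Y ∧ A ⊆ Y ∧ Y ⊆ B),
        upperP (bdry n) p Y
    = (∏ τ ∈ bdry n \ B, (1 - p τ)) *
      ∑ S ∈ (maxSimp A).powerset,
        (-1 : ℝ) ^ S.card *
          ∏ τ ∈ B.filter (fun τ => ∃ σ ∈ S, σ ⊆ τ), (1 - p τ) := by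
  have hAb : A ⊆ bdry n := hAB.trans hBb
  have step1 : ∑ Y ∈ (bdry n).powerset.filter (fun Y => IsComplex Y ∧ A ⊆ Y ∧ Y ⊆ B),
        upperP (bdry n) p Y
      = ∑ X ∈ B.powerset, if ∀ σ ∈ maxSimp A, ∃ τ ∈ X, σ ⊆ τ then bern (bdry n) p X else 0 := by
    rw [← Finset.sum_filter]
    have hset : B.powerset.filter (fun X => ∀ σ ∈ maxSimp A, ∃ τ ∈ X, σ ⊆ τ) =
        (bdry n).powerset.filter (fun X => clUp X ∈
          (bdry n).powerset.filter (fun Y => IsComplex Y ∧ A ⊆ Y ∧ Y ⊆ B)) := by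
      ext X
      simp only [Finset.mem_filter, Finset.mem_powerset]
      constructor
      · rintro ⟨h1, h2⟩
        have hX := h1.trans hBb
        have h3 := (clUp_sub_iff X B hX hB).2 h1
        exact ⟨hX, h3.trans hBb, clUp_complex X, (sub_clUp_iff X A hAb).2 h2, h3⟩
      · rintro ⟨hX, _, _, h2, h3⟩
        exact ⟨(clUp_sub_iff X B hX hB).1 h3, (sub_clUp_iff X A hAb).1 h2⟩
    rw [hset]
    unfold upperP
    simp only [Finset.sum_filter (s := (bdry n).powerset) (p := fun X => clUp X = _)]
    rw [Finset.sum_comm, Finset.sum_filter (p := fun X => clUp X ∈ _)]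
    refine Finset.sum_congr rfl fun X _ => ?_
    rw [Finset.sum_ite_eq]
  have step2 : ∀ X : Finset (Finset (Fin (n+1))),
      (if ∀ σ ∈ maxSimp A, ∃ τ ∈ X, σ ⊆ τ then bern (bdry n) p X else 0) =
      ∑ S ∈ (maxSimp A).powerset, (-1 : ℝ) ^ S.card *
        (if ∀ σ ∈ S, ¬ ∃ τ ∈ X, σ ⊆ τ then bern (bdry n) p X else 0) := by
    intro X
    have h := Finset.prod_add (fun σ => -(if ¬ ∃ τ ∈ X, σ ⊆ τ then (1:ℝ) else 0))
      (fun _ => (1:ℝ)) (maxSimp A)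
    have h' : ∏ σ ∈ maxSimp A, (-(if ¬ ∃ τ ∈ X, σ ⊆ τ then (1:ℝ) else 0) + 1) =
        if ∀ σ ∈ maxSimp A, ∃ τ ∈ X, σ ⊆ τ then 1 else 0 := by
      have e := Finset.prod_boole (s := maxSimp A) (M₀ := ℝ) (p := fun σ => ∃ τ ∈ X, σ ⊆ τ)
      refine Eq.trans ?_ (e.trans (by congr))
      refine Finset.prod_congr rfl fun σ _ => ?_
      by_cases hh : ∃ τ ∈ X, σ ⊆ τ <;> simp [hh]
    rw [h'] at h
    rw [← mul_boole, mul_comm, h, Finset.sum_mul]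
    refine Finset.sum_congr rfl fun S _ => ?_
    rw [Finset.prod_neg, Finset.prod_boole, Finset.prod_const_one, mul_one, mul_assoc, boole_mul]
    congr
  rw [step1, Finset.sum_congr rfl fun X _ => step2 X, Finset.sum_comm, Finset.mul_sum]
  refine Finset.sum_congr rfl fun S _ => ?_
  rw [← Finset.mul_sum, ← Finset.sum_filter, mul_left_comm]
  congr 1
  have hset : B.powerset.filter (fun X => ∀ σ ∈ S, ¬ ∃ τ ∈ X, σ ⊆ τ) =
      (B \ B.filter (fun τ => ∃ σ ∈ S, σ ⊆ τ)).powerset := by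
    ext X
    simp only [Finset.mem_filter, Finset.mem_powerset, Finset.subset_iff (s₂ := B \ _),
      Finset.subset_iff (s₂ := B), Finset.mem_sdiff]
    constructor
    · rintro ⟨h1, h2⟩ τ hτ
      exact ⟨h1 hτ, fun ⟨_, σ, hσ, hs⟩ => h2 σ hσ ⟨τ, hτ, hs⟩⟩
    · intro h
      exact ⟨fun τ hτ => (h hτ).1, fun σ hσ ⟨τ, hτ, hs⟩ => (h hτ).2 ⟨(h hτ).1, σ, hσ, hs⟩⟩
  rw [hset, sum_bern_powerset _ _ (Finset.sdiff_subset.trans hBb)]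
  rw [← Finset.prod_union]
  · congr 1
    ext a
    have := @hBb a
    simp only [Finset.mem_sdiff, Finset.mem_union, Finset.mem_filter]
    generalize (∃ σ ∈ S, σ ⊆ a) = P
    tauto
  · rw [Finset.disjoint_left]
    intro a
    simp only [Finset.mem_sdiff, Finset.mem_filter]
    tauto
end

section
/- Let A ⊆ B ⊆ ∂Δ_n be simplicial complexes. (1) If the sets A_{{σ}} = {τ ∉ A : τ ⊆ σ}, for σ ∈ E(B), are pairwise disjoint, then Σ_{Y complex, A⊆Y⊆B} P̲_n(Y) = (∏_{τ∈A} p_τ) · ∏_{σ∈E(B)} (1 − P_{{σ}}), where P_{{σ}} = ∏_{τ∈A_{{σ}}} p_τ. (2) If the sets B_{{σ}} = {τ ∈ B : τ ⊇ σ}, for σ ∈ M(A), are pairwise disjoint, then Σ_{Y complex, A⊆Y⊆B} P̄_n(Y) = (∏_{τ∈∂Δ_n, τ∉B} q_τ) · ∏_{σ∈M(A)} (1 − Q_{{σ}}), where Q_{{σ}} = ∏_{τ∈B_{{σ}}} q_τ. -/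
open Finset

lemma aux_base {α : Type*} [DecidableEq α] (S A : Finset α) (hA : A ⊆ S) (p : α → ℝ) :
    ∑ X ∈ S.powerset.filter (fun X => A ⊆ X), (∏ a ∈ X, p a) * ∏ a ∈ S \ X, (1 - p a)
      = ∏ a ∈ A, p a := by
  have h := Finset.prod_add p (fun a => if a ∈ A then 0 else 1 - p a) S
  have h1 : ∏ a ∈ S, (p a + if a ∈ A then 0 else 1 - p a) = ∏ a ∈ A, p a := by
    rw [← Finset.prod_subset hA (f := fun a => p a + if a ∈ A then 0 else 1 - p a)]
    · exact Finset.prod_congr rfl (fun a ha => by simp [ha])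
    · intro a _ ha
      simp [ha]
  rw [← h1, h, Finset.sum_filter]
  refine Finset.sum_congr rfl fun X hX => ?_
  split_ifs with hAX
  · congr 1
    refine Finset.prod_congr rfl fun a ha => ?_
    rw [if_neg]
    intro h'
    exact (Finset.mem_sdiff.1 ha).2 (hAX h')
  · obtain ⟨a, ha, hn⟩ := Finset.not_subset.1 hAX
    rw [Finset.prod_eq_zero (i := a) (s := S \ X), mul_zero]
    · exact Finset.mem_sdiff.2 ⟨hA ha, hn⟩
    · simp [ha]

lemma aux_main {α ι : Type*} [DecidableEq α] [DecidableEq ι] (S : Finset α) (p : α → ℝ)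
    (F : ι → Finset α) (E : Finset ι) : ∀ A : Finset α, A ⊆ S →
    (∀ σ ∈ E, F σ ⊆ S) → (∀ σ ∈ E, Disjoint A (F σ)) →
    (∀ σ ∈ E, ∀ σ' ∈ E, σ ≠ σ' → Disjoint (F σ) (F σ')) →
    ∑ X ∈ S.powerset.filter (fun X => A ⊆ X ∧ ∀ σ ∈ E, ¬ F σ ⊆ X),
      (∏ a ∈ X, p a) * ∏ a ∈ S \ X, (1 - p a)
      = (∏ a ∈ A, p a) * ∏ σ ∈ E, (1 - ∏ a ∈ F σ, p a) := by
  induction E using Finset.induction_on with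
  | empty =>
    intro A hA _ _ _
    simpa using aux_base S A hA p
  | insert s E hs ih =>
    intro A hA hS hD hP
    have i1 := ih A hA (fun σ h => hS σ (mem_insert_of_mem h))
      (fun σ h => hD σ (mem_insert_of_mem h))
      (fun σ h σ' h' => hP σ (mem_insert_of_mem h) σ' (mem_insert_of_mem h'))
    have i2 := ih (A ∪ F s) (union_subset hA (hS s (mem_insert_self _ _)))
      (fun σ h => hS σ (mem_insert_of_mem h))
      (fun σ h => disjoint_union_left.2 ⟨hD σ (mem_insert_of_mem h),
        hP s (mem_insert_self _ _) σ (mem_insert_of_mem h) (by rintro rfl; exact hs h)⟩)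
      (fun σ h σ' h' => hP σ (mem_insert_of_mem h) σ' (mem_insert_of_mem h'))
    rw [prod_union (hD s (mem_insert_self _ _))] at i2
    have key : ∀ f : Finset α → ℝ,
        ∑ X ∈ S.powerset.filter (fun X => A ⊆ X ∧ ∀ σ ∈ insert s E, ¬ F σ ⊆ X), f X
        = ∑ X ∈ S.powerset.filter (fun X => A ⊆ X ∧ ∀ σ ∈ E, ¬ F σ ⊆ X), f X
        - ∑ X ∈ S.powerset.filter (fun X => A ∪ F s ⊆ X ∧ ∀ σ ∈ E, ¬ F σ ⊆ X), f X := by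
      intro f
      rw [sum_filter, sum_filter, sum_filter, ← sum_sub_distrib]
      refine sum_congr rfl fun X _ => ?_
      simp only [forall_mem_insert, union_subset_iff]
      by_cases h1 : A ⊆ X <;> by_cases h2 : F s ⊆ X <;>
        by_cases h3 : ∀ σ ∈ E, ¬ F σ ⊆ X <;> simp [h1, h2, h3]
    rw [key, i1, i2, prod_insert hs]
    ring

lemma aux_main' {α ι : Type*} [DecidableEq α] [DecidableEq ι] (S : Finset α) (p : α → ℝ)
    (F : ι → Finset α) (E : Finset ι) (A : Finset α) (P : Finset α → Prop) [DecidablePred P]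
    (hPr : ∀ X, X ⊆ S → (P X ↔ A ⊆ X ∧ ∀ σ ∈ E, ¬ F σ ⊆ X)) (hA : A ⊆ S)
    (h1 : ∀ σ ∈ E, F σ ⊆ S) (h2 : ∀ σ ∈ E, Disjoint A (F σ))
    (h3 : ∀ σ ∈ E, ∀ σ' ∈ E, σ ≠ σ' → Disjoint (F σ) (F σ')) :
    ∑ X ∈ S.powerset.filter P, (∏ a ∈ X, p a) * ∏ a ∈ S \ X, (1 - p a)
      = (∏ a ∈ A, p a) * ∏ σ ∈ E, (1 - ∏ a ∈ F σ, p a) := by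
  rw [← aux_main S p F E A hA h1 h2 h3]
  refine sum_congr ?_ fun _ _ => rfl
  ext X
  simp only [mem_filter, mem_powerset]
  exact and_congr_right (hPr X)

lemma aux_fiber {n : ℕ} (S : Finset (Finset (Fin (n+1)))) (T : Finset (Finset (Finset (Fin (n+1)))))
    (c : Finset (Finset (Fin (n+1))) → Finset (Finset (Fin (n+1))))
    (f : Finset (Finset (Fin (n+1))) → ℝ) :
    ∑ Y ∈ T, ∑ X ∈ S.powerset.filter (fun X => c X = Y), f X
      = ∑ X ∈ S.powerset.filter (fun X => c X ∈ T), f X := by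
  rw [← Finset.sum_fiberwise_of_maps_to (s := S.powerset.filter (fun X => c X ∈ T)) (t := T) (g := c)
    (fun X hX => (mem_filter.1 hX).2)]
  refine sum_congr rfl fun Y hY => sum_congr ?_ fun _ _ => rfl
  ext X
  simp only [mem_filter]
  constructor
  · rintro ⟨h, rfl⟩
    exact ⟨⟨h, hY⟩, rfl⟩
  · rintro ⟨⟨h, _⟩, h'⟩
    exact ⟨h, h'⟩

lemma aux_low {n : ℕ} (A B X : Finset (Finset (Fin (n+1))))
    (hA : IsComplex A) (hAB : A ⊆ B) (hBb : B ⊆ bdry n) (hX : X ⊆ bdry n) :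
    (clLow X ⊆ bdry n ∧ IsComplex (clLow X) ∧ A ⊆ clLow X ∧ clLow X ⊆ B) ↔
    (A ⊆ X ∧ ∀ σ ∈ extSimp (bdry n) B, ¬ (bdry n).filter (fun τ => τ ∉ A ∧ τ ⊆ σ) ⊆ X) := by
  have hne : ∀ σ ∈ bdry n, σ.Nonempty := fun σ h => by
    simp only [bdry, mem_filter] at h; exact h.2.1
  have hcX : clLow X ⊆ X := by
    intro σ h
    simp only [clLow, mem_filter] at h
    exact h.2.2 σ (Subset.refl _) h.2.1
  have hc : IsComplex (clLow X) := by
    intro σ h τ hτ hn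
    simp only [clLow, mem_filter, mem_univ, true_and] at h ⊢
    exact ⟨hn, fun ρ hρ => h.2 ρ (hρ.trans hτ)⟩
  constructor
  · rintro ⟨-, -, h1, h2⟩
    refine ⟨h1.trans hcX, fun σ hσ hF => ?_⟩
    simp only [extSimp, mem_filter] at hσ
    apply hσ.2.1
    apply h2
    simp only [clLow, mem_filter, mem_univ, true_and]
    refine ⟨hne σ hσ.1, fun τ hτ hn => ?_⟩
    by_cases hτA : τ ∈ A
    · exact hcX (h1 hτA)
    · apply hF
      simp only [mem_filter]
      refine ⟨?_, hτA, hτ⟩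
      rcases eq_or_ssubset_of_subset hτ with rfl | h
      · exact hσ.1
      · exact hBb (hσ.2.2 τ h hn)
  · rintro ⟨h1, h2⟩
    refine ⟨hcX.trans hX, hc, ?_, ?_⟩
    · intro σ hσ
      simp only [clLow, mem_filter, mem_univ, true_and]
      exact ⟨hne σ (hBb (hAB hσ)), fun τ hτ hn => h1 (hA σ hσ τ hτ hn)⟩
    · by_contra hcon
      have hN : (clLow X \ B).Nonempty := by
        obtain ⟨a, ha, hb⟩ := not_subset.1 hcon
        exact ⟨a, mem_sdiff.2 ⟨ha, hb⟩⟩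
      obtain ⟨σ, hσ, hmin⟩ := exists_min_image (clLow X \ B) card hN
      rw [mem_sdiff] at hσ
      refine h2 σ ?_ ?_
      · simp only [extSimp, mem_filter]
        refine ⟨hX (hcX hσ.1), hσ.2, fun τ hτ hn => ?_⟩
        by_contra hτB
        have := hmin τ (mem_sdiff.2 ⟨hc σ hσ.1 τ hτ.subset hn, hτB⟩)
        have := card_lt_card hτ
        omega
      · intro τ hτ
        simp only [mem_filter] at hτ
        exact hcX (hc σ hσ.1 τ hτ.2.2 (hne τ hτ.1))

lemma aux_up {n : ℕ} (A B X : Finset (Finset (Fin (n+1))))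
    (hB : IsComplex B) (hAB : A ⊆ B) (hBb : B ⊆ bdry n) (hX : X ⊆ bdry n) :
    (clUp X ⊆ bdry n ∧ IsComplex (clUp X) ∧ A ⊆ clUp X ∧ clUp X ⊆ B) ↔
    (bdry n \ B ⊆ bdry n \ X ∧ ∀ σ ∈ maxSimp A, ¬ B.filter (fun τ => σ ⊆ τ) ⊆ bdry n \ X) := by
  have hne : ∀ σ ∈ bdry n, σ.Nonempty := fun σ h => by
    simp only [bdry, mem_filter] at h; exact h.2.1
  have hXc : X ⊆ clUp X := by
    intro σ h
    simp only [clUp, mem_filter, mem_univ, true_and]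
    exact ⟨hne σ (hX h), σ, h, Subset.refl _⟩
  have hc : IsComplex (clUp X) := by
    intro σ h τ hτ hn
    simp only [clUp, mem_filter, mem_univ, true_and] at h ⊢
    obtain ⟨-, ρ, h1, h2⟩ := h
    exact ⟨hn, ρ, h1, hτ.trans h2⟩
  constructor
  · rintro ⟨-, -, h1, h2⟩
    refine ⟨sdiff_subset_sdiff (Subset.refl _) (hXc.trans h2), fun σ hσ hF => ?_⟩
    simp only [maxSimp, mem_filter] at hσ
    have := h1 hσ.1
    simp only [clUp, mem_filter, mem_univ, true_and] at this
    obtain ⟨-, ρ, h3, h4⟩ := this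
    exact (mem_sdiff.1 (hF (mem_filter.2 ⟨h2 (hXc h3), h4⟩))).2 h3
  · rintro ⟨h1, h2⟩
    have hXB : X ⊆ B := by
      intro σ hσ
      by_contra h
      exact (mem_sdiff.1 (h1 (mem_sdiff.2 ⟨hX hσ, h⟩))).2 hσ
    have hcB : clUp X ⊆ B := by
      intro σ h
      simp only [clUp, mem_filter, mem_univ, true_and] at h
      obtain ⟨hn, ρ, h3, h4⟩ := h
      exact hB ρ (hXB h3) σ h4 hn
    refine ⟨hcB.trans hBb, hc, ?_, hcB⟩
    intro σ hσ
    obtain ⟨μ, hμ, hmax⟩ := exists_max_image (A.filter (fun τ => σ ⊆ τ)) card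
      ⟨σ, mem_filter.2 ⟨hσ, Subset.refl _⟩⟩
    rw [mem_filter] at hμ
    have hμM : μ ∈ maxSimp A := by
      simp only [maxSimp, mem_filter]
      exact ⟨hμ.1, fun τ hτ h => eq_of_subset_of_card_le h
        (hmax τ (mem_filter.2 ⟨hτ, hμ.2.trans h⟩))⟩
    obtain ⟨ρ, h3, h4⟩ := not_subset.1 (h2 μ hμM)
    rw [mem_filter] at h3
    have hρ : ρ ∈ X := by
      by_contra h
      exact h4 (mem_sdiff.2 ⟨hBb h3.1, h⟩)
    simp only [clUp, mem_filter, mem_univ, true_and]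
    exact ⟨hne σ (hBb (hAB hσ)), ρ, hρ, hμ.2.trans h3.2⟩

/-- Corollary (simplified sandwich formulae): for simplicial complexes
`A ⊆ B ⊆ ∂Δₙ`, (1) if the sets `A_{σ}` for `σ ∈ E(B)` are pairwise disjoint
then the lower sandwich probability is `P̃ · ∏_{σ∈E(B)} (1 - P_{σ})`;
(2) if the sets `B_{σ}` for `σ ∈ M(A)` are pairwise disjoint then the upper
sandwich probability is `Q̃ · ∏_{σ∈M(A)} (1 - Q_{σ})`. -/
theorem sandwich_disjoint (n : ℕ) (hn : 1 ≤ n) (p : Finset (Fin (n+1)) → ℝ)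
    (hp : ∀ σ ∈ bdry n, 0 ≤ p σ ∧ p σ ≤ 1)
    (A B : Finset (Finset (Fin (n+1))))
    (hA : IsComplex A) (hB : IsComplex B) (hAB : A ⊆ B) (hBb : B ⊆ bdry n) :
    ((∀ σ ∈ extSimp (bdry n) B, ∀ σ' ∈ extSimp (bdry n) B, σ ≠ σ' →
        Disjoint ((bdry n).filter (fun τ => τ ∉ A ∧ τ ⊆ σ))
          ((bdry n).filter (fun τ => τ ∉ A ∧ τ ⊆ σ'))) →
      ∑ Y ∈ (bdry n).powerset.filter (fun Y => IsComplex Y ∧ A ⊆ Y ∧ Y ⊆ B),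
          lowerP (bdry n) p Y
        = (∏ τ ∈ A, p τ) *
          ∏ σ ∈ extSimp (bdry n) B,
            (1 - ∏ τ ∈ (bdry n).filter (fun τ => τ ∉ A ∧ τ ⊆ σ), p τ)) ∧
    ((∀ σ ∈ maxSimp A, ∀ σ' ∈ maxSimp A, σ ≠ σ' →
        Disjoint (B.filter (fun τ => σ ⊆ τ)) (B.filter (fun τ => σ' ⊆ τ))) →
      ∑ Y ∈ (bdry n).powerset.filter (fun Y => IsComplex Y ∧ A ⊆ Y ∧ Y ⊆ B),
          upperP (bdry n) p Y
        = (∏ τ ∈ bdry n \ B, (1 - p τ)) *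
          ∏ σ ∈ maxSimp A, (1 - ∏ τ ∈ B.filter (fun τ => σ ⊆ τ), (1 - p τ))) := by
  constructor
  · intro hD
    unfold lowerP bern
    rw [aux_fiber]
    refine aux_main' (bdry n) p (fun σ => (bdry n).filter (fun τ => τ ∉ A ∧ τ ⊆ σ)) _ A _ ?_
      (hAB.trans hBb) (fun σ _ => filter_subset _ _) ?_ hD
    · intro X hX
      rw [mem_filter, mem_powerset]
      exact aux_low A B X hA hAB hBb hX
    · intro σ _
      rw [disjoint_left]
      intro τ h1 h2
      exact (mem_filter.1 h2).2.1 h1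
  · intro hD
    unfold upperP bern
    rw [aux_fiber]
    rw [← aux_main' (bdry n) (fun τ => 1 - p τ) (fun σ => B.filter (fun τ => σ ⊆ τ)) _ (bdry n \ B)
      (fun X => clUp (bdry n \ X) ∈
        (bdry n).powerset.filter (fun Y => IsComplex Y ∧ A ⊆ Y ∧ Y ⊆ B)) ?_
      sdiff_subset (fun σ _ => (filter_subset _ _).trans hBb) ?_ hD]
    · have hss : ∀ X, X ⊆ bdry n → bdry n \ (bdry n \ X) = X :=
        fun X hX => Finset.sdiff_sdiff_eq_self hX
      refine sum_bij' (fun X _ => bdry n \ X) (fun X _ => bdry n \ X) ?_ ?_ ?_ ?_ ?_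
      · intro X hX
        rw [mem_filter, mem_powerset] at hX
        rw [mem_filter, mem_powerset, hss X hX.1]
        exact ⟨sdiff_subset, hX.2⟩
      · intro X hX
        rw [mem_filter, mem_powerset] at hX
        rw [mem_filter, mem_powerset]
        exact ⟨sdiff_subset, hX.2⟩
      · intro X hX
        rw [mem_filter, mem_powerset] at hX
        exact hss X hX.1
      · intro X hX
        rw [mem_filter, mem_powerset] at hX
        exact hss X hX.1
      · intro X hX
        rw [mem_filter, mem_powerset] at hX
        rw [hss X hX.1, mul_comm]
        simp
    · intro X hX
      rw [mem_filter, mem_powerset]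
      have := aux_up A B (bdry n \ X) hB hAB hBb sdiff_subset
      rwa [Finset.sdiff_sdiff_eq_self hX] at this
    · intro σ _
      rw [disjoint_left]
      intro τ h1 h2
      exact (mem_sdiff.1 h1).2 (mem_filter.1 h2).1
end

section
/- Let A ⊆ B ⊆ ∂Δ_n be simplicial complexes. (1) If E(B) ⊆ E(A), then Σ_{Y complex, A⊆Y⊆B} P̲_n(Y) = ∏_{σ∈A} p_σ · ∏_{σ∈E(B)} q_σ. (2) If M(A) ⊆ M(B), then Σ_{Y complex, A⊆Y⊆B} P̄_n(Y) = ∏_{σ∈∂Δ_n, σ∉B} q_σ · ∏_{σ∈M(A)} p_σ. -/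
open Finset

theorem bern_cyl {n : ℕ} (S U V : Finset (Finset (Fin (n+1)))) (p : Finset (Fin (n+1)) → ℝ)
    (hU : U ⊆ S) (hV : V ⊆ S) (hd : Disjoint U V) :
    ∑ X ∈ S.powerset.filter (fun X => U ⊆ X ∧ Disjoint X V), bern S p X
      = (∏ σ ∈ U, p σ) * ∏ σ ∈ V, (1 - p σ) := by
  have h := Finset.prod_add (fun σ => if σ ∈ V then 0 else p σ)
    (fun σ => if σ ∈ U then 0 else 1 - p σ) S
  have h1 : ∏ σ ∈ S, ((if σ ∈ V then 0 else p σ) + (if σ ∈ U then 0 else 1 - p σ))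
      = (∏ σ ∈ U, p σ) * ∏ σ ∈ V, (1 - p σ) := by
    rw [← Finset.prod_subset (Finset.union_subset hU hV)]
    · rw [Finset.prod_union hd]
      congr 1
      · apply Finset.prod_congr rfl
        intro σ hσ
        have := Finset.disjoint_left.1 hd hσ
        simp [hσ, this]
      · apply Finset.prod_congr rfl
        intro σ hσ
        have := Finset.disjoint_right.1 hd hσ
        simp [hσ, this]
    · intro σ _ h2
      rw [Finset.mem_union, not_or] at h2
      simp [h2.1, h2.2]
  rw [← h1, h, Finset.sum_filter]
  apply Finset.sum_congr rfl
  intro X hX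
  rw [Finset.mem_powerset] at hX
  split_ifs with hc
  · unfold bern
    congr 1
    · apply Finset.prod_congr rfl
      intro σ hσ
      simp [Finset.disjoint_left.1 hc.2 hσ]
    · apply Finset.prod_congr rfl
      intro σ hσ
      have : σ ∉ U := fun h => (Finset.mem_sdiff.1 hσ).2 (hc.1 h)
      simp [this]
  · symm
    by_cases hUX : U ⊆ X
    · have : ¬ Disjoint X V := fun h => hc ⟨hUX, h⟩
      rw [Finset.not_disjoint_iff] at this
      obtain ⟨σ, h1, h2⟩ := this
      rw [Finset.prod_eq_zero h1 (by simp [h2]), zero_mul]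
    · rw [Finset.not_subset] at hUX
      obtain ⟨σ, h1, h2⟩ := hUX
      rw [Finset.prod_eq_zero (s := S \ X) (i := σ) (by simp [hU h1, h2]) (by simp [h1]), mul_zero]

theorem low_iff {n : ℕ} (A B X : Finset (Finset (Fin (n+1))))
    (hA : IsComplex A) (hBb : B ⊆ bdry n) (hAB : A ⊆ B) (hX : X ⊆ bdry n)
    (hE : extSimp (bdry n) B ⊆ extSimp (bdry n) A) :
    (clLow X ∈ (bdry n).powerset.filter (fun Y => IsComplex Y ∧ A ⊆ Y ∧ Y ⊆ B)) ↔
      A ⊆ X ∧ Disjoint X (extSimp (bdry n) B) := by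
  have hlow : clLow X ⊆ X := by
    intro τ hτ
    simp only [clLow, Finset.mem_filter, Finset.mem_univ, true_and] at hτ
    exact hτ.2 τ subset_rfl hτ.1
  have hne : ∀ σ ∈ bdry n, σ.Nonempty := by
    intro σ h
    simp only [bdry, Finset.mem_filter, Finset.mem_univ, true_and] at h
    exact h.1
  rw [Finset.mem_filter, Finset.mem_powerset]
  constructor
  · rintro ⟨-, -, h1, h2⟩
    have hAX := h1.trans hlow
    refine ⟨hAX, Finset.disjoint_left.2 fun σ hσ hσE => ?_⟩
    have hσA := hE hσE
    simp only [extSimp, Finset.mem_filter] at hσE hσA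
    apply hσE.2.1
    apply h2
    simp only [clLow, Finset.mem_filter, Finset.mem_univ, true_and]
    refine ⟨hne σ (hX hσ), fun τ ht htn => ?_⟩
    rcases eq_or_ne τ σ with rfl | hh
    · exact hσ
    · exact hAX (hσA.2.2 τ (ht.ssubset_of_ne hh) htn)
  · rintro ⟨h1, h2⟩
    refine ⟨hlow.trans hX, ?_, ?_, ?_⟩
    · intro σ hσ τ ht htn
      simp only [clLow, Finset.mem_filter, Finset.mem_univ, true_and] at hσ ⊢
      exact ⟨htn, fun ρ hρ => hσ.2 ρ (hρ.trans ht)⟩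
    · intro σ hσ
      simp only [clLow, Finset.mem_filter, Finset.mem_univ, true_and]
      exact ⟨hne σ (hBb (hAB hσ)), fun ρ hρ hn => h1 (hA σ hσ ρ hρ hn)⟩
    · intro σ
      induction σ using Finset.strongInduction with
      | H σ ih =>
        intro hσ
        by_contra hc
        refine Finset.disjoint_left.1 h2 (hlow hσ) ?_
        simp only [extSimp, Finset.mem_filter]
        refine ⟨hX (hlow hσ), hc, fun τ ht htn => ih τ ht ?_⟩
        simp only [clLow, Finset.mem_filter, Finset.mem_univ, true_and] at hσ ⊢
        exact ⟨htn, fun ρ hρ => hσ.2 ρ (hρ.trans ht.1)⟩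

theorem up_iff {n : ℕ} (A B X : Finset (Finset (Fin (n+1))))
    (hB : IsComplex B) (hBb : B ⊆ bdry n) (hAB : A ⊆ B) (hX : X ⊆ bdry n)
    (hM : maxSimp A ⊆ maxSimp B) :
    (clUp X ∈ (bdry n).powerset.filter (fun Y => IsComplex Y ∧ A ⊆ Y ∧ Y ⊆ B)) ↔
      maxSimp A ⊆ X ∧ Disjoint X (bdry n \ B) := by
  have hne : ∀ σ ∈ bdry n, σ.Nonempty := by
    intro σ h
    simp only [bdry, Finset.mem_filter, Finset.mem_univ, true_and] at h
    exact h.1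
  have hup : X ⊆ clUp X := by
    intro τ hτ
    simp only [clUp, Finset.mem_filter, Finset.mem_univ, true_and]
    exact ⟨hne τ (hX hτ), τ, hτ, subset_rfl⟩
  rw [Finset.mem_filter, Finset.mem_powerset]
  constructor
  · rintro ⟨-, -, h1, h2⟩
    have hXB := hup.trans h2
    refine ⟨fun σ hσ => ?_, Finset.disjoint_left.2 fun σ hσ hh => (Finset.mem_sdiff.1 hh).2 (hXB hσ)⟩
    have hσB := hM hσ
    simp only [maxSimp, Finset.mem_filter] at hσ hσB
    have h3 := h1 hσ.1
    simp only [clUp, Finset.mem_filter, Finset.mem_univ, true_and] at h3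
    obtain ⟨-, τ, ht, hst⟩ := h3
    rw [hσB.2 τ (hXB ht) hst]
    exact ht
  · rintro ⟨h1, h2⟩
    have hXB : X ⊆ B := by
      intro σ hσ
      by_contra hc
      exact Finset.disjoint_left.1 h2 hσ (Finset.mem_sdiff.2 ⟨hX hσ, hc⟩)
    have hUB : clUp X ⊆ B := by
      intro τ hτ
      simp only [clUp, Finset.mem_filter, Finset.mem_univ, true_and] at hτ
      obtain ⟨hn, σ, hσ, hs⟩ := hτ
      exact hB σ (hXB hσ) τ hs hn
    refine ⟨hUB.trans hBb, ?_, ?_, hUB⟩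
    · intro σ hσ τ ht htn
      simp only [clUp, Finset.mem_filter, Finset.mem_univ, true_and] at hσ ⊢
      obtain ⟨-, ρ, hρ, hs⟩ := hσ
      exact ⟨htn, ρ, hρ, ht.trans hs⟩
    · intro σ hσ
      simp only [clUp, Finset.mem_filter, Finset.mem_univ, true_and]
      refine ⟨hne σ (hBb (hAB hσ)), ?_⟩
      obtain ⟨m, hm1, hm⟩ := Finset.exists_le_maximal A hσ
      refine ⟨m, h1 ?_, hm1⟩
      simp only [maxSimp, Finset.mem_filter]
      exact ⟨hm.prop, fun τ ht hs => hm.eq_of_le ht hs⟩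

/-- Corollary: for simplicial complexes `A ⊆ B ⊆ ∂Δₙ`, (1) if `E(B) ⊆ E(A)`
then the lower sandwich probability equals `∏_{σ∈A} p_σ · ∏_{σ∈E(B)} q_σ`;
(2) if `M(A) ⊆ M(B)` then the upper sandwich probability equals
`∏_{σ∉B} q_σ · ∏_{σ∈M(A)} p_σ`. -/
theorem sandwich_special (n : ℕ) (hn : 1 ≤ n) (p : Finset (Fin (n+1)) → ℝ)
    (hp : ∀ σ ∈ bdry n, 0 ≤ p σ ∧ p σ ≤ 1)
    (A B : Finset (Finset (Fin (n+1))))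
    (hA : IsComplex A) (hB : IsComplex B) (hAB : A ⊆ B) (hBb : B ⊆ bdry n) :
    (extSimp (bdry n) B ⊆ extSimp (bdry n) A →
      ∑ Y ∈ (bdry n).powerset.filter (fun Y => IsComplex Y ∧ A ⊆ Y ∧ Y ⊆ B),
          lowerP (bdry n) p Y
        = (∏ σ ∈ A, p σ) * ∏ σ ∈ extSimp (bdry n) B, (1 - p σ)) ∧
    (maxSimp A ⊆ maxSimp B →
      ∑ Y ∈ (bdry n).powerset.filter (fun Y => IsComplex Y ∧ A ⊆ Y ∧ Y ⊆ B),
          upperP (bdry n) p Y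
        = (∏ σ ∈ bdry n \ B, (1 - p σ)) * ∏ σ ∈ maxSimp A, p σ) := by
  have hne : ∀ σ ∈ bdry n, σ.Nonempty := by
    intro σ h
    simp only [bdry, Finset.mem_filter, Finset.mem_univ, true_and] at h
    exact h.1
  constructor
  · intro hE
    unfold lowerP
    rw [Finset.sum_fiberwise_eq_sum_filter, ← bern_cyl (bdry n) A (extSimp (bdry n) B) p
      (hAB.trans hBb) (Finset.filter_subset _ _)
      (Finset.disjoint_left.2 fun σ h1 h2 => (Finset.mem_filter.1 h2).2.1 (hAB h1))]
    congr 1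
    apply Finset.filter_congr
    intro X hX
    exact low_iff A B X hA hBb hAB (Finset.mem_powerset.1 hX) hE
  · intro hM
    have hMA : maxSimp A ⊆ A := Finset.filter_subset _ _
    unfold upperP
    rw [Finset.sum_fiberwise_eq_sum_filter, mul_comm, ← bern_cyl (bdry n) (maxSimp A) (bdry n \ B) p
      (hMA.trans (hAB.trans hBb)) Finset.sdiff_subset
      (Finset.disjoint_left.2 fun σ h1 h2 => (Finset.mem_sdiff.1 h2).2 (hAB (hMA h1)))]
    congr 1
    apply Finset.filter_congr
    intro X hX
    exact up_iff A B X hB hBb hAB (Finset.mem_powerset.1 hX) hM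
end

section
/- For every simplicial complex Y ⊆ ∂Δ_n one has the explicit formulas: (1) P̲_n(Y) = ∏_{σ∈Y} p_σ · ∏_{σ∈E(Y)} q_σ; (2) P̄_n(Y) = ∏_{σ∈∂Δ_n, σ∉Y} q_σ · ∏_{σ∈M(Y)} p_σ. -/
open Finset

theorem bern_sum_aux {n : ℕ} (S A B : Finset (Finset (Fin (n+1)))) (p : Finset (Fin (n+1)) → ℝ)
    (hA : A ⊆ S) (hB : B ⊆ S) (hAB : Disjoint A B)
    (P : Finset (Finset (Fin (n+1))) → Prop) [DecidablePred P]
    (hP : ∀ X ⊆ S, P X ↔ (A ⊆ X ∧ Disjoint X B)) :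
    ∑ X ∈ S.powerset.filter P, bern S p X = (∏ σ ∈ A, p σ) * ∏ σ ∈ B, (1 - p σ) := by
  have h1 : ∏ σ ∈ S, ((if σ ∈ B then 0 else p σ) + (if σ ∈ A then 0 else 1 - p σ))
      = (∏ σ ∈ A, p σ) * ∏ σ ∈ B, (1 - p σ) := by
    have h2 : ∀ σ ∈ S, ((if σ ∈ B then 0 else p σ) + (if σ ∈ A then 0 else 1 - p σ))
        = (if σ ∈ A then p σ else 1) * (if σ ∈ B then 1 - p σ else 1) := by
      intro σ _
      by_cases a : σ ∈ A
      · have b : σ ∉ B := Finset.disjoint_left.mp hAB a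
        simp [a, b]
      · by_cases b : σ ∈ B <;> simp [a, b]
    rw [Finset.prod_congr rfl h2, Finset.prod_mul_distrib, Finset.prod_ite_mem,
      Finset.prod_ite_mem, Finset.inter_eq_right.mpr hA, Finset.inter_eq_right.mpr hB]
  rw [← h1, Finset.prod_add, Finset.sum_filter]
  refine Finset.sum_congr rfl fun X hX => ?_
  have hX' := Finset.mem_powerset.mp hX
  split_ifs with h
  · obtain ⟨ha, hb⟩ := (hP X hX').mp h
    unfold bern
    congr 1
    · refine Finset.prod_congr rfl fun σ hσ => ?_
      rw [if_neg (Finset.disjoint_left.mp hb hσ)]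
    · refine Finset.prod_congr rfl fun σ hσ => ?_
      rw [if_neg fun h => (Finset.mem_sdiff.mp hσ).2 (ha h)]
  · symm
    by_cases ha : A ⊆ X
    · have hb : ¬ Disjoint X B := fun hb => h ((hP X hX').mpr ⟨ha, hb⟩)
      obtain ⟨σ, h1, h2⟩ := Finset.not_disjoint_iff.mp hb
      rw [Finset.prod_eq_zero h1 (by simp [h2]), zero_mul]
    · obtain ⟨σ, h1, h2⟩ := Finset.not_subset.mp ha
      rw [Finset.prod_eq_zero (s := S \ X) (i := σ) (by simp [h2, hA h1]) (by simp [h1]), mul_zero]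

theorem clLow_aux {n : ℕ} (X Y : Finset (Finset (Fin (n+1)))) (hX : X ⊆ bdry n)
    (hY : Y ⊆ bdry n) (hYc : IsComplex Y) :
    clLow X = Y ↔ (Y ⊆ X ∧ Disjoint X (extSimp (bdry n) Y)) := by
  constructor
  · rintro rfl
    constructor
    · intro σ hσ
      simp only [clLow, mem_filter, mem_univ, true_and] at hσ
      exact hσ.2 σ subset_rfl hσ.1
    · rw [Finset.disjoint_left]
      intro σ hσ h
      simp only [extSimp, mem_filter] at h
      obtain ⟨hb, hn, hs⟩ := h
      apply hn
      simp only [bdry, mem_filter, mem_univ, true_and] at hb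
      simp only [clLow, mem_filter, mem_univ, true_and]
      refine ⟨hb.1, fun τ hτ hτn => ?_⟩
      rcases hτ.eq_or_ssubset with rfl | h
      · exact hσ
      · have := hs τ h hτn
        simp only [clLow, mem_filter, mem_univ, true_and] at this
        exact this.2 τ subset_rfl hτn
  · rintro ⟨h1, h2⟩
    have key : ∀ τ : Finset (Fin (n+1)), τ.Nonempty →
        (∀ σ : Finset (Fin (n+1)), σ ⊆ τ → σ.Nonempty → σ ∈ X) → τ ∈ Y := by
      intro τ
      induction τ using Finset.strongInduction with
      | H τ ih =>
        intro hn hs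
        by_contra hτ
        refine Finset.disjoint_left.mp h2 (hs τ subset_rfl hn) ?_
        simp only [extSimp, mem_filter]
        exact ⟨hX (hs τ subset_rfl hn), hτ, fun ρ hρ hρn =>
          ih ρ hρ hρn fun σ hσ => hs σ (hσ.trans hρ.subset)⟩
    ext τ
    simp only [clLow, mem_filter, mem_univ, true_and]
    constructor
    · exact fun h => key τ h.1 h.2
    · intro h
      have hb := hY h
      simp only [bdry, mem_filter, mem_univ, true_and] at hb
      exact ⟨hb.1, fun σ hσ hn => h1 (hYc τ h σ hσ hn)⟩

theorem clUp_aux {n : ℕ} (X Y : Finset (Finset (Fin (n+1)))) (hX : X ⊆ bdry n)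
    (hY : Y ⊆ bdry n) (hYc : IsComplex Y) :
    clUp X = Y ↔ (maxSimp Y ⊆ X ∧ Disjoint X (bdry n \ Y)) := by
  have hne : ∀ σ ∈ bdry n, σ.Nonempty := by
    intro σ hb
    simp only [bdry, mem_filter, mem_univ, true_and] at hb
    exact hb.1
  have hXc : X ⊆ clUp X := by
    intro σ hσ
    simp only [clUp, mem_filter, mem_univ, true_and]
    exact ⟨hne σ (hX hσ), σ, hσ, subset_rfl⟩
  constructor
  · rintro rfl
    constructor
    · intro σ hσ
      obtain ⟨h1, h2⟩ := Finset.mem_filter.mp hσ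
      have h3 := h1
      simp only [clUp, mem_filter, mem_univ, true_and] at h3
      obtain ⟨_, τ, hτ, hs⟩ := h3
      rw [h2 τ (hXc hτ) hs]
      exact hτ
    · rw [Finset.disjoint_left]
      intro σ hσ h
      exact (Finset.mem_sdiff.mp h).2 (hXc hσ)
  · rintro ⟨h1, h2⟩
    ext τ
    simp only [clUp, mem_filter, mem_univ, true_and]
    constructor
    · rintro ⟨hn, σ, hσ, hs⟩
      refine hYc σ ?_ τ hs hn
      by_contra h
      exact Finset.disjoint_left.mp h2 hσ (Finset.mem_sdiff.mpr ⟨hX hσ, h⟩)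
    · intro h
      refine ⟨hne τ (hY h), ?_⟩
      obtain ⟨m, hm, hmax⟩ := Y.exists_le_maximal h
      refine ⟨m, h1 ?_, hm⟩
      exact Finset.mem_filter.mpr ⟨hmax.1, fun ρ hρ hs => le_antisymm hs (hmax.2 hρ hs)⟩

/-- Explicit formulae for the lower and upper measures: for a simplicial
complex `Y ⊆ ∂Δₙ`, `P̲ₙ(Y) = ∏_{σ∈Y} p_σ · ∏_{σ∈E(Y)} q_σ` and
`P̄ₙ(Y) = ∏_{σ∉Y} q_σ · ∏_{σ∈M(Y)} p_σ`. -/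
theorem measures_explicit (n : ℕ) (hn : 1 ≤ n) (p : Finset (Fin (n+1)) → ℝ)
    (hp : ∀ σ ∈ bdry n, 0 ≤ p σ ∧ p σ ≤ 1)
    (Y : Finset (Finset (Fin (n+1)))) (hY : Y ⊆ bdry n) (hYc : IsComplex Y) :
    (lowerP (bdry n) p Y
      = (∏ σ ∈ Y, p σ) * ∏ σ ∈ extSimp (bdry n) Y, (1 - p σ)) ∧
    (upperP (bdry n) p Y
      = (∏ σ ∈ bdry n \ Y, (1 - p σ)) * ∏ σ ∈ maxSimp Y, p σ) := by
  constructor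
  · refine bern_sum_aux (bdry n) Y (extSimp (bdry n) Y) p hY (Finset.filter_subset _ _) ?_ _
      fun X hX => clLow_aux X Y hX hY hYc
    rw [Finset.disjoint_left]
    exact fun σ hσ h => (Finset.mem_filter.mp h).2.1 hσ
  · rw [mul_comm]
    refine bern_sum_aux (bdry n) (maxSimp Y) (bdry n \ Y) p
      ((Finset.filter_subset _ _).trans hY) Finset.sdiff_subset ?_ _
      fun X hX => clUp_aux X Y hX hY hYc
    rw [Finset.disjoint_left]
    exact fun σ hσ h => (Finset.mem_sdiff.mp h).2 (Finset.mem_filter.mp hσ).1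
end

section
/- In the upper model, for any fixed simplex σ ∈ ∂Δ_n, the probability that a random simplicial complex Y contains σ equals 1 − ∏_{τ∈∂Δ_n, τ⊇σ} q_τ; equivalently, Σ_{Y complex, σ∉Y} P̄_n(Y) = ∏_{τ∈∂Δ_n, τ⊇σ} q_τ. -/
open Finset

theorem sum_upper_aux {n : ℕ} (p : Finset (Fin (n+1)) → ℝ)
    (Q : Finset (Finset (Fin (n+1))) → Prop) [DecidablePred Q] :
    ∑ Y ∈ (bdry n).powerset.filter (fun Y => IsComplex Y ∧ Q Y), upperP (bdry n) p Y
      = ∑ X ∈ (bdry n).powerset.filter (fun X => Q (clUp X)), bern (bdry n) p X := by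
  have hm : ∀ X ∈ (bdry n).powerset.filter (fun X => Q (clUp X)),
      clUp X ∈ (bdry n).powerset.filter (fun Y => IsComplex Y ∧ Q Y) := by
    intro X hX
    rw [mem_filter, mem_powerset] at hX
    rw [mem_filter, mem_powerset]
    refine ⟨?_, ?_, hX.2⟩
    · intro τ hτ
      simp only [clUp, mem_filter, mem_univ, true_and] at hτ
      obtain ⟨hne, ρ, hρ, hs⟩ := hτ
      have := hX.1 hρ
      simp only [bdry, mem_filter, mem_univ, true_and] at this ⊢
      refine ⟨hne, fun h => this.2 ?_⟩
      rw [h] at hs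
      exact univ_subset_iff.mp hs
    · intro τ hτ τ' hs hne
      simp only [clUp, mem_filter, mem_univ, true_and] at hτ ⊢
      obtain ⟨_, ρ, hρ, h⟩ := hτ
      exact ⟨hne, ρ, hρ, hs.trans h⟩
  rw [← Finset.sum_fiberwise_of_maps_to hm]
  refine Finset.sum_congr rfl fun Y hY => ?_
  rw [upperP, filter_filter]
  refine Finset.sum_congr ?_ fun _ _ => rfl
  refine Finset.filter_congr fun X _ => ?_
  rw [mem_filter] at hY
  constructor
  · intro h
    exact ⟨h ▸ hY.2.2, h⟩
  · exact fun h => h.2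

theorem sum_bern_aux {n : ℕ} (S : Finset (Finset (Fin (n+1)))) (p : Finset (Fin (n+1)) → ℝ) :
    ∑ X ∈ S.powerset, bern S p X = 1 := by
  have := Finset.prod_add p (fun τ => 1 - p τ) S
  simp only [add_sub_cancel, prod_const_one] at this
  exact this.symm

theorem sum_notmem_aux {n : ℕ} (p : Finset (Fin (n+1)) → ℝ)
    (σ : Finset (Fin (n+1))) (hσ : σ ∈ bdry n) :
    ∑ X ∈ (bdry n).powerset.filter (fun X => σ ∉ clUp X), bern (bdry n) p X
      = ∏ τ ∈ (bdry n).filter (fun τ => σ ⊆ τ), (1 - p τ) := by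
  have hne : σ.Nonempty := by
    simp only [bdry, mem_filter, mem_univ, true_and] at hσ
    exact hσ.1
  have h1 : (bdry n).powerset.filter (fun X => σ ∉ clUp X)
      = ((bdry n).filter (fun τ => ¬ σ ⊆ τ)).powerset := by
    ext X
    simp only [mem_filter, mem_powerset, clUp, mem_univ, true_and, hne, subset_iff (s₁ := X)]
    grind
  have h3 := congrArg (fun x => x * ∏ τ ∈ (bdry n).filter (fun τ => σ ⊆ τ), (1 - p τ))
    (sum_bern_aux ((bdry n).filter (fun τ => ¬ σ ⊆ τ)) p)
  simp only [one_mul] at h3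
  rw [h1, ← h3, Finset.sum_mul]
  refine Finset.sum_congr rfl fun X hX => ?_
  rw [mem_powerset] at hX
  rw [bern, bern, mul_assoc, ← Finset.prod_union]
  · congr 2
    ext τ
    have := @hX τ
    simp only [mem_filter, mem_union, mem_sdiff] at this ⊢
    tauto
  · rw [Finset.disjoint_left]
    intro τ
    simp only [mem_filter, mem_sdiff]
    tauto

/-- In the upper model, the probability that a random simplicial complex `Y`
contains a fixed simplex `σ ∈ ∂Δₙ` equals `1 - ∏_{τ⊇σ} q_τ`; equivalently,
`Σ_{Y complex, σ∉Y} P̄ₙ(Y) = ∏_{τ⊇σ} q_τ`. -/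
theorem upper_contains_simplex (n : ℕ) (hn : 1 ≤ n) (p : Finset (Fin (n+1)) → ℝ)
    (hp : ∀ τ ∈ bdry n, 0 ≤ p τ ∧ p τ ≤ 1)
    (σ : Finset (Fin (n+1))) (hσ : σ ∈ bdry n) :
    (∑ Y ∈ (bdry n).powerset.filter (fun Y => IsComplex Y ∧ σ ∈ Y),
        upperP (bdry n) p Y
      = 1 - ∏ τ ∈ (bdry n).filter (fun τ => σ ⊆ τ), (1 - p τ)) ∧
    (∑ Y ∈ (bdry n).powerset.filter (fun Y => IsComplex Y ∧ σ ∉ Y),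
        upperP (bdry n) p Y
      = ∏ τ ∈ (bdry n).filter (fun τ => σ ⊆ τ), (1 - p τ)) := by
  have h2 := sum_notmem_aux p σ hσ
  refine ⟨?_, ?_⟩
  · rw [sum_upper_aux p (fun Y => σ ∈ Y), ← h2, ← sum_bern_aux (bdry n) p,
      ← Finset.sum_filter_add_sum_filter_not (bdry n).powerset (fun X => σ ∈ clUp X)]
    ring
  · rw [sum_upper_aux p (fun Y => σ ∉ Y), h2]
end

section
/- (Links in the lower model.) Fix a simplex σ ∈ Δ_n with ∏_{ν⊆σ} p_ν > 0 and let Δ' be the simplex on the vertex set [n] \ σ. Let λ̲ be the probability measure on simplicial subcomplexes L ⊆ Δ' defined by λ̲(L) = P̲_n({Y : σ ∈ Y and Lk_Y(σ) = L}) / P̲_n({Y : σ ∈ Y}). Then λ̲ is the lower measure on subcomplexes of Δ' with probability parameters p'_τ = p_τ · ∏_{ν⊆σ, ν≠∅} p_{ν∪τ} for τ ∈ Δ'. -/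
open Finset

/-- The simplex `Δ'` spanned by the vertices `[n] \ σ`. -/
def delta' {n : ℕ} (σ : Finset (Fin (n+1))) : Finset (Finset (Fin (n+1))) :=
  (simplexAll n).filter fun τ => τ ⊆ σᶜ

/-- The link of `σ` in `Y`: all simplices `τ` disjoint from `σ` with
`σ ∪ τ ∈ Y`. -/
def linkOf {n : ℕ} (σ : Finset (Fin (n+1))) (Y : Finset (Finset (Fin (n+1)))) :
    Finset (Finset (Fin (n+1))) :=
  (simplexAll n).filter fun τ => τ ⊆ σᶜ ∧ σ ∪ τ ∈ Y

/-- The conditional distribution of the link `Lk_Y(σ)` given `σ ∈ Y`, in the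
lower model on `Δₙ` with parameters `p`. -/
noncomputable def lamLow {n : ℕ} (p : Finset (Fin (n+1)) → ℝ)
    (σ : Finset (Fin (n+1))) (L : Finset (Finset (Fin (n+1)))) : ℝ :=
  (∑ Y ∈ (simplexAll n).powerset.filter
      (fun Y => IsComplex Y ∧ σ ∈ Y ∧ linkOf σ Y = L),
      lowerP (simplexAll n) p Y) /
  (∑ Y ∈ (simplexAll n).powerset.filter (fun Y => IsComplex Y ∧ σ ∈ Y),
      lowerP (simplexAll n) p Y)

lemma aux_one_sub {n : ℕ} (S : Finset (Finset (Fin (n+1)))) (f : Finset (Fin (n+1)) → ℝ) :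
    ∏ t ∈ S, (1 - f t) = ∑ W ∈ S.powerset, (-1) ^ W.card * ∏ t ∈ W, f t := by
  have h := Finset.prod_add (fun t => - f t) (fun _ => (1:ℝ)) S
  simp only [Finset.prod_const_one, mul_one, Finset.prod_neg] at h
  rw [← h]
  exact Finset.prod_congr rfl fun t _ => by ring

lemma aux_bern_s13 {n : ℕ} (S A : Finset (Finset (Fin (n+1)))) (p : Finset (Fin (n+1)) → ℝ)
    (hA : A ⊆ S) :
    ∑ X ∈ S.powerset, bern S p X * (if A ⊆ X then 1 else 0) = ∏ s ∈ A, p s := by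
  have h := Finset.prod_add p (fun s => if s ∈ A then 0 else 1 - p s) S
  have h1 : ∏ s ∈ S, (p s + if s ∈ A then 0 else 1 - p s) = ∏ s ∈ A, p s := by
    rw [← Finset.prod_subset hA (f := fun s => (p s + if s ∈ A then 0 else 1 - p s))]
    · exact Finset.prod_congr rfl (fun s hs => by simp [hs])
    · intro s _ hs
      simp [hs]
  rw [← h1, h]
  refine Finset.sum_congr rfl fun X hX => ?_
  by_cases hAX : A ⊆ X
  · simp only [hAX, if_true, mul_one, bern]
    congr 1
    refine Finset.prod_congr rfl fun s hs => ?_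
    have : s ∉ A := fun h => (Finset.mem_sdiff.1 hs).2 (hAX h)
    simp [this]
  · simp only [hAX, if_false, mul_zero]
    obtain ⟨a, ha, haX⟩ := Finset.not_subset.1 hAX
    rw [Finset.prod_eq_zero (i := a) (s := S \ X)]
    · simp
    · simp [hA ha, haX]
    · simp [ha]

lemma aux_push {n : ℕ} (S A T : Finset (Finset (Fin (n+1)))) (p : Finset (Fin (n+1)) → ℝ)
    (F : Finset (Fin (n+1)) → Finset (Finset (Fin (n+1))))
    (hA : A ⊆ S) (hF : ∀ t ∈ T, F t ⊆ S) (hAF : ∀ t ∈ T, Disjoint A (F t))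
    (hFF : ∀ t ∈ T, ∀ u ∈ T, t ≠ u → Disjoint (F t) (F u))
    (Z : Finset (Finset (Fin (n+1)))) (hZ : Z ⊆ T) :
    ∑ X ∈ S.powerset with A ⊆ X ∧ T.filter (fun t => F t ⊆ X) = Z, bern S p X
      = (∏ s ∈ A, p s) * bern T (fun t => ∏ s ∈ F t, p s) Z := by
  have key : ∀ W ⊆ T, ∑ X ∈ S.powerset, bern S p X * ((if A ⊆ X then 1 else 0) *
      ∏ t ∈ W, (if F t ⊆ X then 1 else 0)) = (∏ s ∈ A, p s) * ∏ t ∈ W, ∏ s ∈ F t, p s := by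
    intro W hW
    have hd : Disjoint A (W.biUnion F) := by
      rw [Finset.disjoint_biUnion_right]
      exact fun t ht => hAF t (hW ht)
    rw [← Finset.prod_biUnion (fun t ht u hu htu => hFF t (hW ht) u (hW hu) htu),
      ← Finset.prod_union hd, ← aux_bern_s13 S (A ∪ W.biUnion F) p
        (Finset.union_subset hA (Finset.biUnion_subset.2 fun t ht => hF t (hW ht)))]
    refine Finset.sum_congr rfl fun X _ => ?_
    congr 1
    rw [Finset.prod_ite_zero]
    simp only [Finset.prod_const_one, Finset.union_subset_iff, Finset.biUnion_subset]
    by_cases h1 : A ⊆ X <;> simp [h1]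
  rw [Finset.sum_filter]
  have e1 : ∀ X ∈ S.powerset,
      (if A ⊆ X ∧ T.filter (fun t => F t ⊆ X) = Z then bern S p X else 0)
      = ∑ W ∈ (T \ Z).powerset, (-1) ^ W.card * (bern S p X * ((if A ⊆ X then 1 else 0) *
        ∏ t ∈ Z ∪ W, (if F t ⊆ X then 1 else 0))) := by
    intro X _
    have e2 : ∑ W ∈ (T \ Z).powerset, (-1 : ℝ) ^ W.card * (bern S p X * ((if A ⊆ X then 1 else 0) *
        ∏ t ∈ Z ∪ W, (if F t ⊆ X then 1 else 0)))
        = bern S p X * (if A ⊆ X then 1 else 0) * (∏ t ∈ Z, (if F t ⊆ X then 1 else 0)) *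
          ∏ t ∈ T \ Z, (1 - (if F t ⊆ X then 1 else 0)) := by
      rw [aux_one_sub, Finset.mul_sum]
      refine Finset.sum_congr rfl fun W hW => ?_
      rw [Finset.prod_union (Finset.disjoint_of_subset_right (Finset.mem_powerset.1 hW)
        Finset.disjoint_sdiff)]
      ring
    rw [e2]
    have e3 : ∀ t ∈ T \ Z, (1 - (if F t ⊆ X then (1:ℝ) else 0)) = if ¬ F t ⊆ X then 1 else 0 := by
      intro t _
      by_cases h : F t ⊆ X <;> simp [h]
    rw [Finset.prod_congr rfl e3, Finset.prod_ite_zero, Finset.prod_ite_zero]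
    have e4 : T.filter (fun t => F t ⊆ X) = Z ↔
        (∀ t ∈ Z, F t ⊆ X) ∧ ∀ t ∈ T \ Z, ¬ F t ⊆ X := by
      constructor
      · intro h
        subst h
        refine ⟨fun t ht => (Finset.mem_filter.1 ht).2, fun t ht h => ?_⟩
        have ht' := Finset.mem_sdiff.1 ht
        exact ht'.2 (Finset.mem_filter.2 ⟨ht'.1, h⟩)
      · rintro ⟨h1, h2⟩
        ext t
        simp only [Finset.mem_filter]
        constructor
        · rintro ⟨ht, h⟩
          by_contra hn
          exact h2 t (by simp [ht, hn]) h
        · exact fun h => ⟨hZ h, h1 t h⟩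
    simp only [e4]
    simp only [Finset.prod_const_one]
    split_ifs <;> first | tauto | simp
  rw [Finset.sum_congr rfl e1, Finset.sum_comm]
  simp_rw [← Finset.mul_sum]
  rw [bern, aux_one_sub, Finset.mul_sum, Finset.mul_sum]
  refine Finset.sum_congr rfl fun W hW => ?_
  have hW' := Finset.mem_powerset.1 hW
  rw [key (Z ∪ W) (Finset.union_subset hZ (hW'.trans Finset.sdiff_subset)),
    Finset.prod_union (Finset.disjoint_of_subset_right hW' Finset.disjoint_sdiff)]
  ring

lemma aux_low_s13 {n : ℕ} (p : Finset (Fin (n+1)) → ℝ)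
    (R : Finset (Finset (Fin (n+1))) → Prop) [DecidablePred R] :
    ∑ Y ∈ (simplexAll n).powerset.filter (fun Y => IsComplex Y ∧ R Y), lowerP (simplexAll n) p Y
      = ∑ X ∈ (simplexAll n).powerset.filter (fun X => R (clLow X)), bern (simplexAll n) p X := by
  rw [← Finset.sum_fiberwise_of_maps_to (g := clLow)
    (s := (simplexAll n).powerset.filter (fun X => R (clLow X)))
    (t := (simplexAll n).powerset.filter (fun Y => IsComplex Y ∧ R Y))]
  · refine Finset.sum_congr rfl fun Y hY => ?_
    rw [lowerP]
    refine Finset.sum_congr ?_ fun _ _ => rfl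
    have := (Finset.mem_filter.1 hY).2.2
    ext X
    simp only [Finset.mem_filter]
    constructor
    · rintro ⟨h, rfl⟩
      exact ⟨⟨h, this⟩, rfl⟩
    · rintro ⟨⟨h, _⟩, h'⟩
      exact ⟨h, h'⟩
  · intro X hX
    simp only [Finset.mem_filter, Finset.mem_powerset] at hX ⊢
    refine ⟨?_, ?_, hX.2⟩
    · intro t ht
      simp only [clLow, simplexAll, Finset.mem_filter, Finset.mem_univ, true_and] at ht ⊢
      exact ht.1
    · intro s hs t hts ht
      simp only [clLow, Finset.mem_filter, Finset.mem_univ, true_and] at hs ⊢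
      exact ⟨ht, fun u hu hu' => hs.2 u (hu.trans hts) hu'⟩

/-- Faces of `σ`. -/
def faces {n : ℕ} (σ : Finset (Fin (n+1))) : Finset (Finset (Fin (n+1))) :=
  (simplexAll n).filter (fun ν => ν ⊆ σ)

/-- All `ν ∪ t` with `ν ⊆ σ`. -/
def fib {n : ℕ} (σ t : Finset (Fin (n+1))) : Finset (Finset (Fin (n+1))) :=
  insert t ((faces σ).image (fun ν => ν ∪ t))

lemma mem_faces {n : ℕ} (σ s : Finset (Fin (n+1))) : s ∈ faces σ ↔ s.Nonempty ∧ s ⊆ σ := by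
  simp [faces, simplexAll]

lemma mem_fib {n : ℕ} (σ t s : Finset (Fin (n+1))) (ht : t ⊆ σᶜ) :
    s ∈ fib σ t ↔ s \ σ = t := by
  simp only [fib, Finset.mem_insert, Finset.mem_image, mem_faces]
  have hd : ∀ x ∈ t, x ∉ σ := fun x hx => Finset.mem_compl.1 (ht hx)
  constructor
  · rintro (rfl | ⟨ν, ⟨_, hν⟩, rfl⟩)
    · ext x
      have := hd x
      simp only [Finset.mem_sdiff]
      tauto
    · ext x
      have := hd x
      have := @hν x
      simp only [Finset.mem_sdiff, Finset.mem_union]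
      tauto
  · rintro rfl
    by_cases h : (s ∩ σ).Nonempty
    · right
      refine ⟨s ∩ σ, ⟨h, Finset.inter_subset_right⟩, ?_⟩
      ext x
      simp only [Finset.mem_sdiff, Finset.mem_union, Finset.mem_inter]
      tauto
    · left
      rw [Finset.not_nonempty_iff_eq_empty, ← Finset.disjoint_iff_inter_eq_empty] at h
      exact (Finset.sdiff_eq_self_of_disjoint h).symm

lemma prod_fib {n : ℕ} (p : Finset (Fin (n+1)) → ℝ) (σ t : Finset (Fin (n+1))) (ht : t ⊆ σᶜ) :
    ∏ s ∈ fib σ t, p s = p t * ∏ ν ∈ faces σ, p (ν ∪ t) := by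
  have hd : ∀ x ∈ t, x ∉ σ := fun x hx => Finset.mem_compl.1 (ht hx)
  rw [fib, Finset.prod_insert, Finset.prod_image]
  · intro ν hν μ hμ h
    have hν' := ((mem_faces σ ν).1 hν).2
    have hμ' := ((mem_faces σ μ).1 hμ).2
    ext x
    have h0 := Finset.ext_iff.1 h x
    simp only [Finset.mem_union] at h0
    have := hd x
    have := @hν' x
    have := @hμ' x
    tauto
  · intro h
    obtain ⟨ν, hν, h⟩ := Finset.mem_image.1 h
    obtain ⟨⟨x, hx⟩, hν'⟩ := (mem_faces σ ν).1 hν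
    exact hd x (h ▸ Finset.mem_union_left _ hx) (hν' hx)

lemma mem_low {n : ℕ} (X : Finset (Finset (Fin (n+1)))) (s : Finset (Fin (n+1))) :
    s ∈ clLow X ↔ s.Nonempty ∧ ∀ u : Finset (Fin (n+1)), u ⊆ s → u.Nonempty → u ∈ X := by
  simp [clLow]

lemma mem_delta {n : ℕ} (σ t : Finset (Fin (n+1))) : t ∈ delta' σ ↔ t.Nonempty ∧ t ⊆ σᶜ := by
  simp [delta', simplexAll]

lemma low_link {n : ℕ} (σ : Finset (Fin (n+1))) (X : Finset (Finset (Fin (n+1))))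
    (hX : faces σ ⊆ X) :
    linkOf σ (clLow X) = clLow ((delta' σ).filter (fun t => fib σ t ⊆ X)) := by
  ext t
  simp only [linkOf, simplexAll, Finset.mem_filter, Finset.mem_univ, true_and, mem_low, mem_delta]
  constructor
  · rintro ⟨ht, hts, -, h⟩
    refine ⟨ht, fun u hu hu' => ⟨⟨hu', hu.trans hts⟩, fun s hs => ?_⟩⟩
    rw [mem_fib _ _ _ (hu.trans hts)] at hs
    apply h
    · intro x hx
      by_cases hxs : x ∈ σ
      · exact Finset.mem_union_left _ hxs
      · exact Finset.mem_union_right _ (hu (hs ▸ Finset.mem_sdiff.2 ⟨hx, hxs⟩))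
    · exact (hs ▸ hu' : (s \ σ).Nonempty).mono Finset.sdiff_subset
  · rintro ⟨ht, h⟩
    have hts := (h t subset_rfl ht).1.2
    refine ⟨ht, hts, ht.mono Finset.subset_union_right, fun u hu hu' => ?_⟩
    by_cases hus : (u \ σ).Nonempty
    · obtain ⟨⟨_, h1⟩, h2⟩ := h (u \ σ) (by exact sdiff_le_iff.2 hu) hus
      exact h2 ((mem_fib _ _ _ h1).2 rfl)
    · rw [Finset.not_nonempty_iff_eq_empty, Finset.sdiff_eq_empty_iff_subset] at hus
      exact hX ((mem_faces _ _).2 ⟨hu', hus⟩)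

/-- Links in the lower model: the conditional distribution of `Lk_Y(σ)` given
`σ ∈ Y` is the lower measure on subcomplexes of `Δ'` with parameters
`p'_τ = p_τ · ∏_{∅≠ν⊆σ} p_{ν∪τ}`. -/
theorem link_lower (n : ℕ) (hn : 1 ≤ n) (p : Finset (Fin (n+1)) → ℝ)
    (hp : ∀ τ ∈ simplexAll n, 0 ≤ p τ ∧ p τ ≤ 1)
    (σ : Finset (Fin (n+1))) (hσ : σ ∈ simplexAll n)
    (hq : 0 < ∏ ν ∈ (simplexAll n).filter (fun ν => ν ⊆ σ), p ν) :
    ∀ L ∈ (delta' σ).powerset.filter (fun L => IsComplex L),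
      lamLow p σ L
        = lowerP (delta' σ)
            (fun τ => p τ * ∏ ν ∈ (simplexAll n).filter (fun ν => ν ⊆ σ), p (ν ∪ τ)) L := by
  intro L _
  change 0 < ∏ ν ∈ faces σ, p ν at hq
  have hσ' : σ.Nonempty := by simpa [simplexAll] using hσ
  have hmem : ∀ X, σ ∈ clLow X ↔ faces σ ⊆ X := by
    intro X
    rw [mem_low]
    constructor
    · intro h s hs
      exact h.2 s ((mem_faces _ _).1 hs).2 ((mem_faces _ _).1 hs).1
    · intro h
      exact ⟨hσ', fun u hu hu' => h ((mem_faces _ _).2 ⟨hu', hu⟩)⟩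
  have hA : faces σ ⊆ simplexAll n := Finset.filter_subset _ _
  have hden : ∑ Y ∈ (simplexAll n).powerset.filter (fun Y => IsComplex Y ∧ σ ∈ Y),
      lowerP (simplexAll n) p Y = ∏ ν ∈ faces σ, p ν := by
    rw [aux_low_s13 p (fun Y => σ ∈ Y), ← aux_bern_s13 (simplexAll n) (faces σ) p hA, Finset.sum_filter]
    refine Finset.sum_congr rfl fun X _ => ?_
    simp [hmem]
  have hnum : ∑ Y ∈ (simplexAll n).powerset.filter
      (fun Y => IsComplex Y ∧ σ ∈ Y ∧ linkOf σ Y = L), lowerP (simplexAll n) p Y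
      = (∏ ν ∈ faces σ, p ν) * lowerP (delta' σ) (fun t => ∏ s ∈ fib σ t, p s) L := by
    rw [aux_low_s13 p (fun Y => σ ∈ Y ∧ linkOf σ Y = L), lowerP, Finset.mul_sum,
      ← Finset.sum_fiberwise_of_maps_to
        (g := fun X => (delta' σ).filter (fun t => fib σ t ⊆ X))
        (t := (delta' σ).powerset.filter (fun Z => clLow Z = L))]
    · refine Finset.sum_congr rfl fun Z hZ => ?_
      simp only [Finset.mem_filter, Finset.mem_powerset] at hZ
      have hc : ∀ t ∈ delta' σ, t ⊆ σᶜ := fun t ht => ((mem_delta _ _).1 ht).2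
      rw [← aux_push (simplexAll n) (faces σ) (delta' σ) p (fib σ) hA ?_ ?_ ?_ Z hZ.1]
      · refine Finset.sum_congr ?_ fun _ _ => rfl
        ext X
        simp only [Finset.mem_filter, hmem]
        constructor
        · rintro ⟨⟨h1, h2, _⟩, h3⟩
          exact ⟨h1, h2, h3⟩
        · rintro ⟨h1, h2, h3⟩
          refine ⟨⟨h1, h2, ?_⟩, h3⟩
          rw [low_link σ X h2, h3, hZ.2]
      · intro t ht s hs
        rw [mem_fib _ _ _ (hc t ht)] at hs
        have h1 := ((mem_delta _ _).1 ht).1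
        simp only [simplexAll, Finset.mem_filter, Finset.mem_univ, true_and]
        exact (hs ▸ h1 : (s \ σ).Nonempty).mono Finset.sdiff_subset
      · intro t ht
        rw [Finset.disjoint_left]
        intro s hs hs'
        rw [mem_fib _ _ _ (hc t ht), Finset.sdiff_eq_empty_iff_subset.2 ((mem_faces _ _).1 hs).2]
          at hs'
        have h1 := ((mem_delta _ _).1 ht).1
        rw [← hs'] at h1
        exact Finset.not_nonempty_empty h1
      · intro t ht u hu htu
        rw [Finset.disjoint_left]
        intro s hs hs'
        rw [mem_fib _ _ _ (hc _ ‹_›)] at hs hs'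
        exact htu (hs.symm.trans hs')
    · intro X hX
      simp only [Finset.mem_filter, Finset.mem_powerset, hmem] at hX ⊢
      exact ⟨Finset.filter_subset _ _, by rw [← low_link σ X hX.2.1, hX.2.2]⟩
  rw [lamLow, hden, hnum, mul_div_cancel_left₀ _ hq.ne', lowerP, lowerP]
  refine Finset.sum_congr rfl fun Z hZ => ?_
  have hc : ∀ t ∈ delta' σ, ∏ s ∈ fib σ t, p s =
      p t * ∏ ν ∈ (simplexAll n).filter (fun ν => ν ⊆ σ), p (ν ∪ t) :=
    fun t ht => prod_fib p σ t ((mem_delta _ _).1 ht).2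
  have hZ' := Finset.mem_powerset.1 (Finset.mem_filter.1 hZ).1
  rw [bern, bern]
  congr 1
  · exact Finset.prod_congr rfl fun t ht => hc t (hZ' ht)
  · exact Finset.prod_congr rfl fun t ht => by rw [hc t (Finset.sdiff_subset ht)]
end

section
/- Let Y and Y' be independent random simplicial complexes in Δ_n, where Y is distributed by the upper measure with parameters p_σ (so q_σ = 1 − p_σ) and Y' by the upper measure with parameters p'_σ (q'_σ = 1 − p'_σ). Then the union Y ∪ Y' is distributed by the upper measure with parameters q_σ · q'_σ in place of the q's, i.e. with probability parameters σ ↦ p_σ + p'_σ − p_σ·p'_σ. Equivalently, the pushforward of the product measure P̄_n × P̄'_n under (Y, Y') ↦ Y ∪ Y' is the upper measure with parameters p_σ + p'_σ − p_σ p'_σ. -/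
open Finset

theorem bern_insert_out {n : ℕ} {S X : Finset (Finset (Fin (n+1)))} {a : Finset (Fin (n+1))}
    (p : Finset (Fin (n+1)) → ℝ) (ha : a ∉ S) (hX : X ⊆ S) :
    bern (insert a S) p X = (1 - p a) * bern S p X := by
  have haX : a ∉ X := fun h => ha (hX h)
  unfold bern
  rw [Finset.insert_sdiff_of_notMem _ haX, Finset.prod_insert (by simp [ha])]
  ring

theorem bern_insert_in {n : ℕ} {S X : Finset (Finset (Fin (n+1)))} {a : Finset (Fin (n+1))}
    (p : Finset (Fin (n+1)) → ℝ) (ha : a ∉ S) (hX : X ⊆ S) :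
    bern (insert a S) p (insert a X) = p a * bern S p X := by
  have haX : a ∉ X := fun h => ha (hX h)
  unfold bern
  have : insert a S \ insert a X = S \ X := by
    ext b; simp only [mem_sdiff, mem_insert]
    constructor
    · tauto
    · rintro ⟨h1, h2⟩
      refine ⟨Or.inr h1, ?_⟩
      rintro (rfl | h)
      · exact ha h1
      · exact h2 h
  rw [this, Finset.prod_insert haX]
  ring

theorem sum_bern_insert {n : ℕ} {S : Finset (Finset (Fin (n+1)))} {a : Finset (Fin (n+1))}
    (p : Finset (Fin (n+1)) → ℝ) (ha : a ∉ S) (f : Finset (Finset (Fin (n+1))) → ℝ) :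
    ∑ X ∈ (insert a S).powerset, bern (insert a S) p X * f X
      = ∑ X ∈ S.powerset, bern S p X * ((1 - p a) * f X + p a * f (insert a X)) := by
  rw [Finset.sum_powerset_insert ha, ← Finset.sum_add_distrib]
  refine Finset.sum_congr rfl fun X hX => ?_
  rw [bern_insert_out p ha (mem_powerset.1 hX), bern_insert_in p ha (mem_powerset.1 hX)]
  ring

theorem bern_union {n : ℕ} (S : Finset (Finset (Fin (n+1))))
    (p p' : Finset (Fin (n+1)) → ℝ) : ∀ f : Finset (Finset (Fin (n+1))) → ℝ,
    ∑ X ∈ S.powerset, bern S p X * ∑ X' ∈ S.powerset, bern S p' X' * f (X ∪ X')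
      = ∑ W ∈ S.powerset, bern S (fun σ => p σ + p' σ - p σ * p' σ) W * f W := by
  induction S using Finset.induction_on with
  | empty => intro f; simp [bern]
  | insert a S ha ih =>
    intro f
    rw [sum_bern_insert p ha, sum_bern_insert _ ha, ← ih]
    refine Finset.sum_congr rfl fun X _ => ?_
    rw [sum_bern_insert p' ha, sum_bern_insert p' ha]
    congr 1
    rw [Finset.mul_sum, Finset.mul_sum, ← Finset.sum_add_distrib]
    refine Finset.sum_congr rfl fun X' _ => ?_
    simp only [Finset.insert_union, Finset.union_insert, Finset.insert_idem]
    ring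

theorem clUp_mem {n : ℕ} (X : Finset (Finset (Fin (n+1)))) :
    clUp X ∈ (simplexAll n).powerset.filter (fun Y => IsComplex Y) := by
  simp only [mem_filter, mem_powerset]
  refine ⟨fun τ h => ?_, fun σ hσ τ hτ hne => ?_⟩
  · simp only [clUp, simplexAll, mem_filter] at h ⊢
    exact ⟨h.1, h.2.1⟩
  · simp only [clUp, mem_filter] at hσ ⊢
    obtain ⟨_, _, ρ, h1, h2⟩ := hσ
    exact ⟨mem_univ _, hne, ρ, h1, hτ.trans h2⟩

theorem clUp_union {n : ℕ} (X X' : Finset (Finset (Fin (n+1)))) :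
    clUp (X ∪ X') = clUp X ∪ clUp X' := by
  ext τ
  simp only [clUp, mem_filter, mem_union, mem_univ, true_and, or_and_right, exists_or, and_or_left]

theorem sum_upperP {n : ℕ} (p : Finset (Fin (n+1)) → ℝ)
    (F : Finset (Finset (Fin (n+1))) → ℝ) :
    ∑ Y ∈ (simplexAll n).powerset.filter (fun Y => IsComplex Y), upperP (simplexAll n) p Y * F Y
      = ∑ X ∈ (simplexAll n).powerset, bern (simplexAll n) p X * F (clUp X) := by
  rw [← Finset.sum_fiberwise_of_maps_to (s := (simplexAll n).powerset) (g := clUp)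
    (fun X _ => clUp_mem X) (fun X => bern (simplexAll n) p X * F (clUp X))]
  refine Finset.sum_congr rfl fun Y _ => ?_
  rw [upperP, Finset.sum_mul]
  refine Finset.sum_congr rfl fun X hX => ?_
  rw [(mem_filter.1 hX).2]

/-- The union of two independent upper random simplicial complexes with
parameters `p` and `p'` is an upper random simplicial complex with parameters
`p_σ + p'_σ - p_σ·p'_σ`: the pushforward of the product measure under
`(Y,Y') ↦ Y ∪ Y'` is the upper measure with these parameters. -/
theorem union_upper (n : ℕ) (hn : 1 ≤ n) (p p' : Finset (Fin (n+1)) → ℝ)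
    (hp : ∀ σ ∈ simplexAll n, 0 ≤ p σ ∧ p σ ≤ 1)
    (hp' : ∀ σ ∈ simplexAll n, 0 ≤ p' σ ∧ p' σ ≤ 1) :
    ∀ Z ∈ (simplexAll n).powerset.filter (fun Z => IsComplex Z),
      (∑ Y ∈ (simplexAll n).powerset.filter (fun Y => IsComplex Y),
        ∑ Y' ∈ ((simplexAll n).powerset.filter
            (fun Y' => IsComplex Y')).filter (fun Y' => Y ∪ Y' = Z),
          upperP (simplexAll n) p Y * upperP (simplexAll n) p' Y')
      = upperP (simplexAll n) (fun σ => p σ + p' σ - p σ * p' σ) Z := by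
  intro Z _
  have h1 : ∀ Y, ∑ Y' ∈ ((simplexAll n).powerset.filter
            (fun Y' => IsComplex Y')).filter (fun Y' => Y ∪ Y' = Z),
          upperP (simplexAll n) p Y * upperP (simplexAll n) p' Y'
      = upperP (simplexAll n) p Y * ∑ X' ∈ (simplexAll n).powerset,
          bern (simplexAll n) p' X' * (if Y ∪ clUp X' = Z then 1 else 0) := by
    intro Y
    rw [← Finset.mul_sum, ← sum_upperP p' (fun Y' => if Y ∪ Y' = Z then 1 else 0),
      Finset.sum_filter (fun Y' => Y ∪ Y' = Z)]
    simp only [mul_ite, mul_one, mul_zero]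
  simp only [h1]
  rw [sum_upperP p (fun Y => ∑ X' ∈ (simplexAll n).powerset,
          bern (simplexAll n) p' X' * (if Y ∪ clUp X' = Z then 1 else 0))]
  simp only [← clUp_union]
  rw [bern_union _ p p' (fun W => if clUp W = Z then 1 else 0), upperP, Finset.sum_filter]
  simp only [mul_ite, mul_one, mul_zero]
end

section
/- Let Y and Y' be independent random simplicial complexes in Δ_n, where Y is distributed by the lower measure with parameters p_σ and Y' by the lower measure with parameters p'_σ. Then the intersection Y ∩ Y' is distributed by the lower measure with parameters p_σ · p'_σ. Equivalently, the pushforward of the product measure P̲_n × P̲'_n under (Y, Y') ↦ Y ∩ Y' is the lower measure with parameters p_σ p'_σ. -/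
open Finset

theorem bern_ins_not {n : ℕ} (S : Finset (Finset (Fin (n+1)))) (p : Finset (Fin (n+1)) → ℝ)
    (a : Finset (Fin (n+1))) (ha : a ∉ S) (X : Finset (Finset (Fin (n+1)))) (hX : X ⊆ S) :
    bern (insert a S) p X = (1 - p a) * bern S p X := by
  unfold bern
  have h1 : a ∉ X := fun h => ha (hX h)
  rw [Finset.insert_sdiff_of_notMem _ h1, Finset.prod_insert (by simp [ha])]
  ring

theorem bern_ins_mem {n : ℕ} (S : Finset (Finset (Fin (n+1)))) (p : Finset (Fin (n+1)) → ℝ)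
    (a : Finset (Fin (n+1))) (ha : a ∉ S) (X : Finset (Finset (Fin (n+1)))) (hX : X ⊆ S) :
    bern (insert a S) p (insert a X) = p a * bern S p X := by
  unfold bern
  have h1 : a ∉ X := fun h => ha (hX h)
  have h2 : insert a S \ insert a X = S \ X := by
    ext x
    simp only [Finset.mem_sdiff, Finset.mem_insert]
    constructor
    · tauto
    · rintro ⟨h, h'⟩
      refine ⟨Or.inr h, ?_⟩
      rintro (rfl | h3)
      · exact ha h
      · exact h' h3
  rw [h2, Finset.prod_insert h1]
  ring

theorem bern_sum_ins {n : ℕ} (S : Finset (Finset (Fin (n+1)))) (p : Finset (Fin (n+1)) → ℝ)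
    (a : Finset (Fin (n+1))) (ha : a ∉ S) (f : Finset (Finset (Fin (n+1))) → ℝ) :
    ∑ X ∈ (insert a S).powerset, bern (insert a S) p X * f X
      = ∑ X ∈ S.powerset, bern S p X * ((1 - p a) * f X + p a * f (insert a X)) := by
  rw [Finset.sum_powerset_insert ha, ← Finset.sum_add_distrib]
  refine Finset.sum_congr rfl fun X hX => ?_
  rw [Finset.mem_powerset] at hX
  rw [bern_ins_not S p a ha X hX, bern_ins_mem S p a ha X hX]
  ring

theorem bern_inter {n : ℕ} (S : Finset (Finset (Fin (n+1)))) (p p' : Finset (Fin (n+1)) → ℝ) :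
    ∀ f : Finset (Finset (Fin (n+1))) → ℝ,
    ∑ X ∈ S.powerset, bern S p X * ∑ X' ∈ S.powerset, bern S p' X' * f (X ∩ X')
      = ∑ W ∈ S.powerset, bern S (fun σ => p σ * p' σ) W * f W := by
  induction S using Finset.induction_on with
  | empty => intro f; simp [bern]
  | insert a S ha ih =>
    intro f
    rw [bern_sum_ins S (fun σ => p σ * p' σ) a ha, bern_sum_ins S p a ha
      (fun X => ∑ X' ∈ (insert a S).powerset, bern (insert a S) p' X' * f (X ∩ X')), ← ih]
    refine Finset.sum_congr rfl fun X hX => ?_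
    congr 1
    rw [bern_sum_ins S p' a ha (fun X' => f (X ∩ X')),
      bern_sum_ins S p' a ha (fun X' => f (insert a X ∩ X')), Finset.mul_sum, Finset.mul_sum,
      ← Finset.sum_add_distrib]
    refine Finset.sum_congr rfl fun X' hX' => ?_
    rw [Finset.mem_powerset] at hX hX'
    have h1 : a ∉ X := fun h => ha (hX h)
    have h2 : a ∉ X' := fun h => ha (hX' h)
    rw [Finset.inter_insert_of_notMem h1, Finset.insert_inter_of_notMem h2,
      ← Finset.insert_inter_distrib]
    ring

theorem clLow_inter {n : ℕ} (X X' : Finset (Finset (Fin (n+1)))) :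
    clLow (X ∩ X') = clLow X ∩ clLow X' := by
  ext τ
  simp only [clLow, Finset.mem_filter, Finset.mem_univ, true_and, Finset.mem_inter]
  constructor
  · rintro ⟨h, h'⟩
    exact ⟨⟨h, fun σ a b => (h' σ a b).1⟩, ⟨h, fun σ a b => (h' σ a b).2⟩⟩
  · rintro ⟨⟨h, h1⟩, ⟨_, h2⟩⟩
    exact ⟨h, fun σ a b => ⟨h1 σ a b, h2 σ a b⟩⟩

theorem clLow_mem {n : ℕ} (X : Finset (Finset (Fin (n+1)))) :
    clLow X ∈ (simplexAll n).powerset.filter (fun Y => IsComplex Y) := by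
  rw [Finset.mem_filter, Finset.mem_powerset]
  constructor
  · intro τ hτ
    simp only [clLow, simplexAll, Finset.mem_filter, Finset.mem_univ, true_and] at hτ ⊢
    exact hτ.1
  · intro σ hσ τ hτ hn
    simp only [clLow, Finset.mem_filter, Finset.mem_univ, true_and] at hσ ⊢
    exact ⟨hn, fun ρ h h' => hσ.2 ρ (h.trans hτ) h'⟩

theorem lower_expect {n : ℕ} (p : Finset (Fin (n+1)) → ℝ)
    (g : Finset (Finset (Fin (n+1))) → ℝ) :
    ∑ Y ∈ (simplexAll n).powerset.filter (fun Y => IsComplex Y), lowerP (simplexAll n) p Y * g Y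
      = ∑ X ∈ (simplexAll n).powerset, bern (simplexAll n) p X * g (clLow X) := by
  rw [← Finset.sum_fiberwise_of_maps_to (s := (simplexAll n).powerset) (g := clLow)
    (fun X _ => clLow_mem X) (fun X => bern (simplexAll n) p X * g (clLow X))]
  refine Finset.sum_congr rfl fun Y _ => ?_
  unfold lowerP
  rw [Finset.sum_mul]
  refine Finset.sum_congr rfl fun X hX => ?_
  rw [(Finset.mem_filter.1 hX).2]

/-- The intersection of two independent lower random simplicial complexes with
parameters `p` and `p'` is a lower random simplicial complex with parameters
`p_σ·p'_σ`: the pushforward of the product measure under `(Y,Y') ↦ Y ∩ Y'` is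
the lower measure with these parameters. -/
theorem intersection_lower (n : ℕ) (hn : 1 ≤ n) (p p' : Finset (Fin (n+1)) → ℝ)
    (hp : ∀ σ ∈ simplexAll n, 0 ≤ p σ ∧ p σ ≤ 1)
    (hp' : ∀ σ ∈ simplexAll n, 0 ≤ p' σ ∧ p' σ ≤ 1) :
    ∀ Z ∈ (simplexAll n).powerset.filter (fun Z => IsComplex Z),
      (∑ Y ∈ (simplexAll n).powerset.filter (fun Y => IsComplex Y),
        ∑ Y' ∈ ((simplexAll n).powerset.filter
            (fun Y' => IsComplex Y')).filter (fun Y' => Y ∩ Y' = Z),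
          lowerP (simplexAll n) p Y * lowerP (simplexAll n) p' Y')
      = lowerP (simplexAll n) (fun σ => p σ * p' σ) Z := by
  intro Z hZ
  have h := bern_inter (simplexAll n) p p' (fun W => if clLow W = Z then (1:ℝ) else 0)
  have hR : lowerP (simplexAll n) (fun σ => p σ * p' σ) Z
      = ∑ W ∈ (simplexAll n).powerset, bern (simplexAll n) (fun σ => p σ * p' σ) W *
        (if clLow W = Z then (1:ℝ) else 0) := by
    unfold lowerP
    rw [Finset.sum_filter]
    refine Finset.sum_congr rfl fun X _ => ?_
    rw [mul_ite, mul_one, mul_zero]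
  rw [hR, ← h]
  simp only [clLow_inter]
  rw [← lower_expect p (fun Y => ∑ X' ∈ (simplexAll n).powerset,
    bern (simplexAll n) p' X' * (if Y ∩ clLow X' = Z then (1:ℝ) else 0))]
  refine Finset.sum_congr rfl fun Y _ => ?_
  rw [← lower_expect p' (fun Y' => if Y ∩ Y' = Z then (1:ℝ) else 0), Finset.mul_sum,
    Finset.sum_filter]
  refine Finset.sum_congr rfl fun Y' _ => ?_
  rw [mul_ite, mul_one, mul_zero, mul_ite, mul_zero]
end

section
/- Fix r ≥ 0 and consider the upper-model random simplicial complex Y in Δ_n with probability parameters p_σ = p_i for dim σ = i ≤ r and p_σ = 0 for dim σ > r, where p_0, …, p_r ∈ [0,1] and q_i = 1 − p_i. Then for every ℓ with 0 ≤ ℓ ≤ r, the expectation of the number f_ℓ(Y) of ℓ-dimensional simplices of Y with respect to the upper measure equals E(f_ℓ) = C(n+1, ℓ+1) · (1 − ∏_{i=ℓ}^{r} q_i^{C(n−ℓ, i−ℓ)}), where C(a,b) denotes the binomial coefficient. -/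
open Finset

lemma aux_prob {n : ℕ} (S : Finset (Finset (Fin (n+1)))) (p : Finset (Fin (n+1)) → ℝ)
    (τ : Finset (Fin (n+1))) :
    ∑ X ∈ S.powerset, (if ∃ σ ∈ X, τ ⊆ σ then (1:ℝ) else 0) * bern S p X
      = 1 - ∏ σ ∈ S.filter (fun σ => τ ⊆ σ), (1 - p σ) := by
  have h1 : ∑ X ∈ S.powerset, bern S p X = 1 := by
    unfold bern
    rw [← Finset.prod_add]
    simp
  have h2 : ∑ X ∈ S.powerset, (if ∃ σ ∈ X, τ ⊆ σ then (0:ℝ) else 1) * bern S p X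
      = ∏ σ ∈ S.filter (fun σ => τ ⊆ σ), (1 - p σ) := by
    have : ∀ X ∈ S.powerset, (if ∃ σ ∈ X, τ ⊆ σ then (0:ℝ) else 1) * bern S p X
        = (∏ σ ∈ X, (if τ ⊆ σ then 0 else p σ)) * ∏ σ ∈ S \ X, (1 - p σ) := by
      intro X _
      unfold bern
      split_ifs with h
      · obtain ⟨σ, hσ, hs⟩ := h
        have hz : (∏ σ ∈ X, (if τ ⊆ σ then 0 else p σ)) = 0 :=
          Finset.prod_eq_zero hσ (if_pos hs)
        rw [hz]
        simp
      · push Not at h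
        rw [one_mul]
        congr 1
        exact Finset.prod_congr rfl fun σ hσ => by simp [h σ hσ]
    rw [Finset.sum_congr rfl this, ← Finset.prod_add, Finset.prod_filter]
    refine Finset.prod_congr rfl fun σ _ => ?_
    split_ifs <;> simp
  rw [← h2]
  refine Eq.trans ?_ (congrArg (fun x => x - _) h1)
  rw [← Finset.sum_sub_distrib]
  refine Finset.sum_congr rfl fun X _ => ?_
  split_ifs <;> simp

lemma aux_prod (n r : ℕ) (p : ℕ → ℝ) (ℓ : ℕ) (hl : ℓ ≤ r) (τ : Finset (Fin (n+1)))
    (hτ : τ.card = ℓ + 1) :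
    ∏ σ ∈ (simplexAll n).filter (fun σ => τ ⊆ σ),
      (1 - (if σ.card ≤ r+1 then p (σ.card - 1) else 0))
    = ∏ i ∈ Finset.Icc ℓ r, (1 - p i) ^ ((n-ℓ).choose (i-ℓ)) := by
  have hne : τ.Nonempty := Finset.card_pos.mp (by omega)
  have h1 : ∏ σ ∈ (simplexAll n).filter (fun σ => τ ⊆ σ),
      (1 - (if σ.card ≤ r+1 then p (σ.card - 1) else 0))
      = ∏ ρ ∈ τᶜ.powerset, (fun m => (1 - (if m + ℓ ≤ r then p (m + ℓ) else 0))) ρ.card := by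
    symm
    refine Finset.prod_bij' (fun ρ _ => τ ∪ ρ) (fun σ _ => σ \ τ) ?_ ?_ ?_ ?_ ?_
    · intro ρ _
      simp only [simplexAll, Finset.mem_filter, Finset.mem_univ, true_and]
      exact ⟨hne.mono Finset.subset_union_left, Finset.subset_union_left⟩
    · intro σ _
      rw [Finset.mem_powerset]
      intro x hx
      simp at hx ⊢
      exact hx.2
    · intro ρ hρ
      rw [Finset.mem_powerset] at hρ
      ext x
      have := @hρ x
      simp at this ⊢
      tauto
    · intro σ hσ
      simp only [Finset.mem_filter] at hσ
      exact Finset.union_sdiff_of_subset hσ.2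
    · intro ρ hρ
      rw [Finset.mem_powerset] at hρ
      have hd : Disjoint τ ρ := by
        rw [Finset.disjoint_left]
        intro x hx hx'
        have := hρ hx'
        simp at this
        exact this hx
      rw [Finset.card_union_of_disjoint hd, hτ]
      have e : ℓ + 1 + ρ.card - 1 = ρ.card + ℓ := by omega
      have e2 : (ℓ + 1 + ρ.card ≤ r + 1) ↔ (ρ.card + ℓ ≤ r) := by omega
      simp only [e, e2]
  have h3 : ∀ (f : ℕ → ℝ) (x : Finset (Fin (n+1))), ∏ ρ ∈ x.powerset, f ρ.card
      = ∏ m ∈ Finset.range (x.card + 1), f m ^ (x.card.choose m) := by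
    intro f x
    rw [Finset.prod_powerset]
    refine Finset.prod_congr rfl fun m _ => ?_
    rw [Finset.prod_congr rfl (fun ρ hρ => by rw [(Finset.mem_powersetCard.mp hρ).2]),
      Finset.prod_const, Finset.card_powersetCard]
  rw [h1]
  refine (h3 (fun m => (1 - (if m + ℓ ≤ r then p (m + ℓ) else 0))) τᶜ).trans ?_
  have hc : τᶜ.card = n - ℓ := by
    rw [Finset.card_compl, hτ, Fintype.card_fin]; omega
  rw [hc]
  have hA : ∏ i ∈ Finset.Icc ℓ r, (1 - p i) ^ ((n-ℓ).choose (i-ℓ))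
      = ∏ m ∈ Finset.range (r + 1 - ℓ),
        (1 - (if m + ℓ ≤ r then p (m + ℓ) else 0)) ^ ((n-ℓ).choose m) := by
    refine Finset.prod_bij' (fun i _ => i - ℓ) (fun m _ => m + ℓ) ?_ ?_ ?_ ?_ ?_
    · intro i hi; simp at hi ⊢; omega
    · intro i hi; simp at hi ⊢; omega
    · intro i hi; simp at hi ⊢; omega
    · intro i hi; simp
    · intro i hi
      simp at hi
      have e : i - ℓ + ℓ = i := by omega
      simp [e, hi.2]
  rw [hA]
  have k1 : ∀ N, n - ℓ + 1 ≤ N → ∏ m ∈ Finset.range (n - ℓ + 1),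
      (1 - (if m + ℓ ≤ r then p (m + ℓ) else 0)) ^ ((n-ℓ).choose m)
      = ∏ m ∈ Finset.range N,
      (1 - (if m + ℓ ≤ r then p (m + ℓ) else 0)) ^ ((n-ℓ).choose m) := by
    intro N hN
    refine Finset.prod_subset (Finset.range_mono hN) fun m _ hm => ?_
    rw [Nat.choose_eq_zero_of_lt (by simp at hm; omega), pow_zero]
  have k2 : ∀ N, r + 1 - ℓ ≤ N → ∏ m ∈ Finset.range (r + 1 - ℓ),
      (1 - (if m + ℓ ≤ r then p (m + ℓ) else 0)) ^ ((n-ℓ).choose m)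
      = ∏ m ∈ Finset.range N,
      (1 - (if m + ℓ ≤ r then p (m + ℓ) else 0)) ^ ((n-ℓ).choose m) := by
    intro N hN
    refine Finset.prod_subset (Finset.range_mono hN) fun m _ hm => ?_
    rw [if_neg (by simp at hm; omega)]
    simp
  rw [k2 (n + r + 1) (by omega)]
  exact k1 (n + r + 1) (by omega)

/-- Expected face numbers in the upper model with dimension-dependent
parameters `p_i` (for dimensions `i ≤ r`) and `0` above dimension `r`:
`E(f_ℓ) = C(n+1,ℓ+1)·(1 - ∏_{i=ℓ}^{r} q_i^{C(n-ℓ,i-ℓ)})`. -/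
theorem expected_face_numbers (n r : ℕ) (hn : 1 ≤ n) (p : ℕ → ℝ)
    (hp : ∀ i ≤ r, 0 ≤ p i ∧ p i ≤ 1) (ℓ : ℕ) (hl : ℓ ≤ r) :
    ∑ Y ∈ (simplexAll n).powerset.filter (fun Y => IsComplex Y),
      ((Y.filter (fun σ => σ.card = ℓ+1)).card : ℝ) *
        upperP (simplexAll n)
          (fun σ => if σ.card ≤ r+1 then p (σ.card - 1) else 0) Y
    = ((n+1).choose (ℓ+1) : ℝ) *
        (1 - ∏ i ∈ Finset.Icc ℓ r, (1 - p i) ^ ((n-ℓ).choose (i-ℓ))) := by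
  set P : Finset (Fin (n+1)) → ℝ := fun σ => if σ.card ≤ r+1 then p (σ.card - 1) else 0 with hP
  have hmaps : ∀ X ∈ (simplexAll n).powerset,
      clUp X ∈ (simplexAll n).powerset.filter (fun Y => IsComplex Y) := by
    intro X _
    rw [Finset.mem_filter, Finset.mem_powerset]
    constructor
    · intro τ hτ
      simp only [clUp, simplexAll, Finset.mem_filter, Finset.mem_univ, true_and] at hτ ⊢
      exact hτ.1
    · intro σ hσ τ hτ hne
      simp only [clUp, Finset.mem_filter, Finset.mem_univ, true_and] at hσ ⊢
      obtain ⟨_, ρ, hρ, hs⟩ := hσ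
      exact ⟨hne, ρ, hρ, hτ.trans hs⟩
  have step1 : ∑ Y ∈ (simplexAll n).powerset.filter (fun Y => IsComplex Y),
      ((Y.filter (fun σ => σ.card = ℓ+1)).card : ℝ) * upperP (simplexAll n) P Y
      = ∑ X ∈ (simplexAll n).powerset,
        (((clUp X).filter (fun σ => σ.card = ℓ+1)).card : ℝ) * bern (simplexAll n) P X := by
    rw [← Finset.sum_fiberwise_of_maps_to hmaps]
    refine Finset.sum_congr rfl fun Y _ => ?_
    rw [upperP, Finset.mul_sum]
    refine Finset.sum_congr rfl fun X hX => ?_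
    rw [(Finset.mem_filter.mp hX).2]
  have step2 : ∀ X : Finset (Finset (Fin (n+1))),
      (((clUp X).filter (fun σ => σ.card = ℓ+1)).card : ℝ)
      = ∑ τ ∈ Finset.powersetCard (ℓ+1) (Finset.univ : Finset (Fin (n+1))),
        (if ∃ σ ∈ X, τ ⊆ σ then (1:ℝ) else 0) := by
    intro X
    rw [Finset.sum_boole]
    congr 2
    ext τ
    simp only [clUp, Finset.mem_filter, Finset.mem_univ, true_and, Finset.mem_powersetCard,
      Finset.subset_univ]
    constructor
    · rintro ⟨⟨_, h⟩, h'⟩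
      exact ⟨h', h⟩
    · rintro ⟨h', h⟩
      exact ⟨⟨Finset.card_pos.mp (by omega), h⟩, h'⟩
  rw [step1]
  simp_rw [step2, Finset.sum_mul]
  rw [Finset.sum_comm]
  have step3 : ∀ τ ∈ Finset.powersetCard (ℓ+1) (Finset.univ : Finset (Fin (n+1))),
      ∑ X ∈ (simplexAll n).powerset, (if ∃ σ ∈ X, τ ⊆ σ then (1:ℝ) else 0) *
        bern (simplexAll n) P X
      = 1 - ∏ i ∈ Finset.Icc ℓ r, (1 - p i) ^ ((n-ℓ).choose (i-ℓ)) := by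
    intro τ hτ
    rw [aux_prob, hP, aux_prod n r p ℓ hl τ (Finset.mem_powersetCard.mp hτ).2]
  rw [Finset.sum_congr rfl step3, Finset.sum_const, Finset.card_powersetCard, nsmul_eq_mul,
    Finset.card_univ, Fintype.card_fin]
end
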